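/- arXiv:1210.1853 — 3 statements merged into one kernel-verified Lean document; each statement's English description precedes it below -/
import Mathlib

section
/- Ultraspherical logarithmic Sobolev inequality: let d ≥ 1. For every continuously differentiable function f on [−1,1] that is not identically zero, ∫_{−1}^{1} |f'(x)|² ν(x) dν_d(x) ≥ (d/2) ∫_{−1}^{1} |f|² log( |f|² / ‖f‖_2² ) dν_d, where ‖f‖_2² = ∫_{−1}^{1} |f|² dν_d. -/
open MeasureTheory Real

noncomputable section

/-- The normalization constant `Z_d = √π Γ(d/2)/Γ((d+1)/2)`. -/
def Zd (d : ℕ) : ℝ := Real.sqrt π * Real.Gamma ((d : ℝ) / 2) / Real.Gamma (((d : ℝ) + 1) / 2)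

/-- The probability measure `dν_d(x) = Z_d⁻¹ (1 − x²)^{d/2−1} dx` on `(−1,1)`. -/
def nuMeas (d : ℕ) : Measure ℝ :=
  (volume.restrict (Set.Ioo (-1 : ℝ) 1)).withDensity
    fun x => ENNReal.ofReal ((1 - x ^ 2) ^ ((d : ℝ) / 2 - 1) / Zd d)

lemma us_w_int (d : ℕ) (hd : 1 ≤ d) :
    IntegrableOn (fun x : ℝ => (1 - x ^ 2) ^ ((d : ℝ) / 2 - 1)) (Set.Ioo (-1 : ℝ) 1) := by
  have h1 : IntegrableOn (fun x : ℝ => 1 / √(1 - x ^ 2)) (Set.Ioc (-1 : ℝ) 1) := by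
    refine intervalIntegral.integrableOn_deriv_of_nonneg continuous_arcsin.continuousOn
      (fun x hx ↦ ?_) (fun x hx => by positivity)
    exact hasDerivAt_arcsin (by linarith [hx.1]) (by linarith [hx.2])
  have h2 := h1.mono_set Set.Ioo_subset_Ioc_self
  have hm : Measurable (fun x : ℝ => (1 - x ^ 2) ^ ((d : ℝ) / 2 - 1)) := by fun_prop
  refine Integrable.mono' h2 hm.aestronglyMeasurable ?_
  refine (ae_restrict_iff' measurableSet_Ioo).2 (Filter.Eventually.of_forall fun x hx => ?_)
  have hp : 0 < 1 - x ^ 2 := by nlinarith [hx.1, hx.2]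
  rw [Real.norm_of_nonneg (by positivity), Real.sqrt_eq_rpow, one_div, ← Real.rpow_neg hp.le]
  apply Real.rpow_le_rpow_of_exponent_ge hp (by nlinarith [sq_nonneg x])
  have : (1 : ℝ) ≤ d := by exact_mod_cast hd
  linarith

lemma us_ibp_vol (d : ℕ) (hd : 1 ≤ d) (G G' : ℝ → ℝ)
    (hG : ∀ x ∈ Set.Icc (-1 : ℝ) 1, HasDerivAt G (G' x) x)
    (hG' : ContinuousOn G' (Set.Icc (-1 : ℝ) 1)) :
    ∫ x in Set.Ioo (-1 : ℝ) 1, (1 - x ^ 2) ^ ((d : ℝ) / 2 - 1) *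
      ((1 - x ^ 2) * G' x - d * x * G x) = 0 := by
  have hd' : (1 : ℝ) ≤ d := by exact_mod_cast hd
  have hGc : ContinuousOn G (Set.Icc (-1 : ℝ) 1) :=
    fun x hx => (hG x hx).continuousAt.continuousWithinAt
  have hint : IntegrableOn (fun x : ℝ => (1 - x ^ 2) ^ ((d : ℝ) / 2 - 1) *
      ((1 - x ^ 2) * G' x - d * x * G x)) (Set.Ioo (-1 : ℝ) 1) := by
    have hc : ContinuousOn (fun x : ℝ => ((1 - x ^ 2) * G' x - d * x * G x))
      (Set.Icc (-1 : ℝ) 1) := by fun_prop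
    obtain ⟨C, hC⟩ := isCompact_Icc.exists_bound_of_continuousOn hc
    refine Integrable.mul_bdd (c := C) (us_w_int d hd)
      ((hc.mono Set.Ioo_subset_Icc_self).aestronglyMeasurable measurableSet_Ioo) ?_
    exact (ae_restrict_iff' measurableSet_Ioo).2 (Filter.Eventually.of_forall fun x hx =>
      hC x (Set.Ioo_subset_Icc_self hx))
  have key := intervalIntegral.integral_eq_sub_of_hasDerivAt_of_le (a := -1) (b := 1)
    (f := fun x => (1 - x ^ 2) ^ ((d : ℝ) / 2) * G x)
    (f' := fun x : ℝ => (1 - x ^ 2) ^ ((d : ℝ) / 2 - 1) *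
      ((1 - x ^ 2) * G' x - d * x * G x)) (by norm_num) ?_ ?_ ?_
  · rw [intervalIntegral.integral_of_le (by norm_num), integral_Ioc_eq_integral_Ioo] at key
    rw [key]
    have : (0 : ℝ) ^ ((d : ℝ) / 2) = 0 := Real.zero_rpow (by positivity)
    norm_num [this]
  · apply ContinuousOn.mul _ hGc
    apply ContinuousOn.rpow_const (by fun_prop)
    intro x hx; right; positivity
  · intro x hx
    have hp : 0 < 1 - x ^ 2 := by nlinarith [hx.1, hx.2]
    have h1 : HasDerivAt (fun x : ℝ => 1 - x ^ 2) (-(2 * x)) x := by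
      simpa using ((hasDerivAt_id x).pow 2).const_sub 1
    have h2 := (h1.rpow_const (p := (d : ℝ) / 2) (Or.inl hp.ne')).mul
      (hG x (Set.Ioo_subset_Icc_self hx))
    refine h2.congr_deriv ?_
    have : (1 - x ^ 2) ^ ((d : ℝ) / 2) = (1 - x ^ 2) ^ ((d : ℝ) / 2 - 1) * (1 - x ^ 2) := by
      rw [← Real.rpow_add_one hp.ne']; ring_nf
    rw [this]; ring
  · rw [intervalIntegrable_iff_integrableOn_Ioo_of_le (by norm_num)]
    exact hint

lemma us_mass_step (d : ℕ) (hd : 1 ≤ d) :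
    ((d : ℝ) + 1) * ∫ x in Set.Ioo (-1 : ℝ) 1, (1 - x ^ 2) ^ (((d + 2 : ℕ) : ℝ) / 2 - 1)
      = d * ∫ x in Set.Ioo (-1 : ℝ) 1, (1 - x ^ 2) ^ ((d : ℝ) / 2 - 1) := by
  have h := us_ibp_vol d hd (fun x => x) (fun _ => 1) (fun x _ => hasDerivAt_id x)
    continuousOn_const
  rw [← sub_eq_zero, ← integral_const_mul, ← integral_const_mul, ← integral_sub, ← h]
  · apply setIntegral_congr_fun measurableSet_Ioo
    intro x hx
    have hp : 0 < 1 - x ^ 2 := by nlinarith [hx.1, hx.2]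
    have : (1 - x ^ 2) ^ (((d + 2 : ℕ) : ℝ) / 2 - 1)
        = (1 - x ^ 2) ^ ((d : ℝ) / 2 - 1) * (1 - x ^ 2) := by
      rw [← Real.rpow_add_one hp.ne']; push_cast; ring_nf
    simp only [this]; ring
  · exact (us_w_int (d + 2) (by omega)).const_mul _
  · exact (us_w_int d hd).const_mul _

lemma us_mass (d : ℕ) (hd : 1 ≤ d) :
    ∫ x in Set.Ioo (-1 : ℝ) 1, (1 - x ^ 2) ^ ((d : ℝ) / 2 - 1) = Zd d := by
  induction d using Nat.strong_induction_on with
  | _ d ih =>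
    rcases d with _ | _ | _ | d
    · omega
    · have key := intervalIntegral.integral_eq_sub_of_hasDerivAt_of_le (a := -1) (b := 1)
        (f := arcsin) (f' := fun x : ℝ => (1 - x ^ 2) ^ (((0 + 1 : ℕ) : ℝ) / 2 - 1)) (by norm_num)
        continuous_arcsin.continuousOn ?_ ?_
      · rw [intervalIntegral.integral_of_le (by norm_num), integral_Ioc_eq_integral_Ioo] at key
        rw [key]
        simp only [Zd, arcsin_neg, arcsin_one]
        norm_num [Real.Gamma_one_half_eq, Real.mul_self_sqrt Real.pi_pos.le]
      · intro x hx
        have hp : 0 < 1 - x ^ 2 := by nlinarith [hx.1, hx.2]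
        refine (hasDerivAt_arcsin (x := x) (by linarith [hx.1]) (by linarith [hx.2])).congr_deriv ?_
        rw [Real.sqrt_eq_rpow, one_div, ← Real.rpow_neg hp.le]
        norm_num
      · rw [intervalIntegrable_iff_integrableOn_Ioo_of_le (by norm_num)]
        exact us_w_int 1 le_rfl
    · have hg : Real.Gamma (3 / 2) = √π / 2 := by
        rw [show (3 : ℝ) / 2 = 1 / 2 + 1 by norm_num, Real.Gamma_add_one (by norm_num),
          Real.Gamma_one_half_eq]; ring
      have hs : √π ≠ 0 := by positivity
      norm_num [Zd]
      rw [hg]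
      field_simp
    · have h1 := us_mass_step (d + 1) (by omega)
      rw [ih (d + 1) (by omega) (by omega)] at h1
      have hz : ((d : ℝ) + 1 + 1) * Zd (d + 1 + 2) = ((d : ℝ) + 1) * Zd (d + 1) := by
        unfold Zd
        push_cast
        rw [show ((d : ℝ) + 1 + 2) / 2 = ((d : ℝ) + 1) / 2 + 1 by ring,
          show ((d : ℝ) + 1 + 2 + 1) / 2 = ((d : ℝ) + 1 + 1) / 2 + 1 by ring,
          Real.Gamma_add_one (by positivity), Real.Gamma_add_one (by positivity)]
        have : Real.Gamma (((d : ℝ) + 1 + 1) / 2) ≠ 0 := (Real.Gamma_pos_of_pos (by positivity)).ne'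
        field_simp
      push_cast at h1 hz ⊢
      rw [← hz] at h1
      have := mul_left_cancel₀ (by positivity) h1
      convert this using 5
      ring

lemma us_Zd_pos (d : ℕ) (hd : 1 ≤ d) : 0 < Zd d := by
  have : (1 : ℝ) ≤ d := by exact_mod_cast hd
  have h1 := Real.Gamma_pos_of_pos (s := (d : ℝ) / 2) (by positivity)
  have h2 := Real.Gamma_pos_of_pos (s := ((d : ℝ) + 1) / 2) (by positivity)
  unfold Zd
  positivity

lemma us_integral (d : ℕ) (hd : 1 ≤ d) (g : ℝ → ℝ) :
    ∫ x, g x ∂(nuMeas d) =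
      (∫ x in Set.Ioo (-1 : ℝ) 1, (1 - x ^ 2) ^ ((d : ℝ) / 2 - 1) * g x) / Zd d := by
  have hz := us_Zd_pos d hd
  unfold nuMeas
  rw [integral_withDensity_eq_integral_toReal_smul (by fun_prop) (by simp), ← integral_div]
  apply setIntegral_congr_fun measurableSet_Ioo
  intro x hx
  have hp : 0 < 1 - x ^ 2 := by nlinarith [hx.1, hx.2]
  simp only [smul_eq_mul]
  rw [ENNReal.toReal_ofReal (by positivity)]
  ring

lemma us_prob (d : ℕ) (hd : 1 ≤ d) : IsProbabilityMeasure (nuMeas d) := by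
  constructor
  have hz := us_Zd_pos d hd
  unfold nuMeas
  rw [withDensity_apply _ MeasurableSet.univ, Measure.restrict_univ,
    ← ofReal_integral_eq_lintegral_ofReal, integral_div, us_mass d hd, div_self hz.ne']
  · simp
  · exact (us_w_int d hd).div_const _
  · refine (ae_restrict_iff' measurableSet_Ioo).2 (Filter.Eventually.of_forall fun x hx => ?_)
    have hp : 0 < 1 - x ^ 2 := by nlinarith [hx.1, hx.2]
    simp only [Pi.zero_apply]
    positivity

lemma us_ibp (d : ℕ) (hd : 1 ≤ d) (G G' : ℝ → ℝ)
    (hG : ∀ x ∈ Set.Icc (-1 : ℝ) 1, HasDerivAt G (G' x) x)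
    (hG' : ContinuousOn G' (Set.Icc (-1 : ℝ) 1)) :
    ∫ x, ((1 - x ^ 2) * G' x - d * x * G x) ∂(nuMeas d) = 0 := by
  rw [us_integral d hd, us_ibp_vol d hd G G' hG hG', zero_div]

lemma us_ae (d : ℕ) : ∀ᵐ x ∂(nuMeas d), x ∈ Set.Ioo (-1 : ℝ) 1 := by
  unfold nuMeas
  exact (withDensity_absolutelyContinuous _ _).ae_le (ae_restrict_mem measurableSet_Ioo)

lemma us_ae' (d : ℕ) : ∀ᵐ x ∂(nuMeas d), x ∈ Set.Icc (-1 : ℝ) 1 :=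
  (us_ae d).mono fun _ hx => Set.Ioo_subset_Icc_self hx

lemma us_integrable (d : ℕ) (hd : 1 ≤ d) (g : ℝ → ℝ) (hg : ContinuousOn g (Set.Icc (-1 : ℝ) 1)) :
    Integrable g (nuMeas d) := by
  have := us_prob d hd
  have h := hg.integrableOn_compact (μ := nuMeas d) isCompact_Icc
  rwa [IntegrableOn, Measure.restrict_eq_self_of_ae_mem (us_ae' d)] at h

lemma us_alg (x u h1 h2 h3 l d b : ℝ) (hb : b * (d + 2) = 1) :
    (1 - x ^ 2) * (2 * h1 * ((1 - x ^ 2) * (u * (h3 + 3 * h1 * h2 + h1 ^ 3))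
        - (2 + d) * x * (u * (h2 + h1 ^ 2)) - d * (u * h1))
      - h1 ^ 2 * ((1 - x ^ 2) * (u * (h2 + h1 ^ 2)) - d * x * (u * h1)))
      - 2 * d * ((1 - x ^ 2) * (u * (h2 + h1 ^ 2)) - d * x * (u * h1)) * (l + 1)
    = ((1 - x ^ 2) * (2 * (-(2 * x) * (u * h1 * h2) + (1 - x ^ 2) * (u * h1 * h1 * h2
            + u * h2 * h2 + u * h1 * h3))
          + (1 + 2 * b) * (-(2 * x) * (u * h1 ^ 3) + (1 - x ^ 2) * (u * h1 * h1 ^ 3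
            + u * (3 * h1 ^ 2 * h2)))
          - 2 * d * (u * (h2 + h1 ^ 2) * (l + 1) + u * h1 * h1))
        - d * x * (2 * ((1 - x ^ 2) * (u * h1 * h2)) + (1 + 2 * b) * ((1 - x ^ 2) * (u * h1 ^ 3))
          - 2 * d * (u * h1 * (l + 1))))
      - 2 * u * (1 - x ^ 2) ^ 2 * (h2 ^ 2 + 3 * b * h1 ^ 2 * h2 + b * h1 ^ 4) := by
  linear_combination (2 * (1 - x ^ 2) * x * u * h1 ^ 3) * hb

lemma us_key (d : ℕ) (hd : 1 ≤ d) (u u1 u2 u3 : ℝ → ℝ)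
    (hu : ∀ x, HasDerivAt u (u1 x) x) (hu1 : ∀ x, HasDerivAt u1 (u2 x) x)
    (hu2 : ∀ x, HasDerivAt u2 (u3 x) x) (hu3 : Continuous u3)
    (hpos : ∀ x ∈ Set.Icc (-1 : ℝ) 1, 0 < u x) :
    ∫ x, ((1 - x ^ 2) * (2 * (u1 x / u x) * ((1 - x ^ 2) * u3 x - (2 + d) * x * u2 x - d * u1 x)
      - (u1 x / u x) ^ 2 * ((1 - x ^ 2) * u2 x - d * x * u1 x))
      - 2 * d * ((1 - x ^ 2) * u2 x - d * x * u1 x) * (log (u x) + 1)) ∂(nuMeas d) ≤ 0 := by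
  have hd' : (1 : ℝ) ≤ d := by exact_mod_cast hd
  set b : ℝ := 1 / ((d : ℝ) + 2) with hbdef
  have hb : b * (d + 2) = 1 := by rw [hbdef]; field_simp
  have hb0 : 0 < b := by positivity
  have hb1 : b ≤ 1 / 3 := by
    rw [hbdef]; apply one_div_le_one_div_of_le <;> linarith
  let h1 : ℝ → ℝ := fun x => u1 x / u x
  let h2 : ℝ → ℝ := fun x => u2 x / u x - (u1 x / u x) ^ 2
  let h3 : ℝ → ℝ := fun x => u3 x / u x - 3 * (u1 x / u x) * (u2 x / u x) + 2 * (u1 x / u x) ^ 3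
  have cu : Continuous u := continuous_iff_continuousAt.2 fun x => (hu x).continuousAt
  have cu1 : Continuous u1 := continuous_iff_continuousAt.2 fun x => (hu1 x).continuousAt
  have cu2 : Continuous u2 := continuous_iff_continuousAt.2 fun x => (hu2 x).continuousAt
  have hne : ∀ x ∈ Set.Icc (-1 : ℝ) 1, u x ≠ 0 := fun x hx => (hpos x hx).ne'
  have ch1 : ContinuousOn h1 (Set.Icc (-1 : ℝ) 1) :=
    cu1.continuousOn.div cu.continuousOn hne
  have ch2 : ContinuousOn h2 (Set.Icc (-1 : ℝ) 1) :=
    (cu2.continuousOn.div cu.continuousOn hne).sub (ch1.pow 2)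
  have ch3 : ContinuousOn h3 (Set.Icc (-1 : ℝ) 1) :=
    ((hu3.continuousOn.div cu.continuousOn hne).sub ((ch1.const_mul 3).mul
      (cu2.continuousOn.div cu.continuousOn hne))).add ((ch1.pow 3).const_mul 2)
  have clog : ContinuousOn (fun x => log (u x)) (Set.Icc (-1 : ℝ) 1) :=
    cu.continuousOn.log hne
  have e1 : ∀ x ∈ Set.Icc (-1 : ℝ) 1, u1 x = u x * h1 x := by
    intro x hx; have := hne x hx; simp only [h1]; field_simp
  have e2 : ∀ x ∈ Set.Icc (-1 : ℝ) 1, u2 x = u x * (h2 x + h1 x ^ 2) := by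
    intro x hx; have := hne x hx; simp only [h1, h2]; field_simp; ring
  have e3 : ∀ x ∈ Set.Icc (-1 : ℝ) 1, u3 x = u x * (h3 x + 3 * h1 x * h2 x + h1 x ^ 3) := by
    intro x hx; have := hne x hx; simp only [h1, h2, h3]; field_simp; ring
  have dh1 : ∀ x ∈ Set.Icc (-1 : ℝ) 1, HasDerivAt h1 (h2 x) x := by
    intro x hx
    have := hne x hx
    refine ((hu1 x).div (hu x) this).congr_deriv ?_
    simp only [h2]; field_simp
  have dh2 : ∀ x ∈ Set.Icc (-1 : ℝ) 1, HasDerivAt h2 (h3 x) x := by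
    intro x hx
    have := hne x hx
    refine (((hu2 x).div (hu x) this).sub ((dh1 x hx).pow 2)).congr_deriv ?_
    simp only [h1, h2, h3, Nat.add_one_sub_one, pow_one]; push_cast; field_simp; ring
  have dlog : ∀ x ∈ Set.Icc (-1 : ℝ) 1, HasDerivAt (fun x => log (u x)) (h1 x) x :=
    fun x hx => (hu x).log (hne x hx)
  have dnu : ∀ x : ℝ, HasDerivAt (fun x : ℝ => 1 - x ^ 2) (-(2 * x)) x := by
    intro x; simpa using ((hasDerivAt_id x).pow 2).const_sub 1
  let G : ℝ → ℝ := fun x => 2 * ((1 - x ^ 2) * (u x * h1 x * h2 x))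
    + (1 + 2 * b) * ((1 - x ^ 2) * (u x * h1 x ^ 3)) - 2 * d * (u1 x * (log (u x) + 1))
  let G' : ℝ → ℝ := fun x => 2 * (-(2 * x) * (u x * h1 x * h2 x) + (1 - x ^ 2) *
        (u x * h1 x * h1 x * h2 x + u x * h2 x * h2 x + u x * h1 x * h3 x))
      + (1 + 2 * b) * (-(2 * x) * (u x * h1 x ^ 3) + (1 - x ^ 2) * (u x * h1 x * h1 x ^ 3
        + u x * (3 * h1 x ^ 2 * h2 x)))
      - 2 * d * (u x * (h2 x + h1 x ^ 2) * (log (u x) + 1) + u x * h1 x * h1 x)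
  have hGd : ∀ x ∈ Set.Icc (-1 : ℝ) 1, HasDerivAt G (G' x) x := by
    intro x hx
    have a := (((dnu x).mul (((hu x).mul (dh1 x hx)).mul (dh2 x hx))).const_mul 2)
    have b' := (((dnu x).mul ((hu x).mul ((dh1 x hx).pow 3))).const_mul (1 + 2 * b))
    have c := (((hu1 x).mul ((dlog x hx).add_const 1)).const_mul (2 * (d : ℝ)))
    refine ((a.add b').sub c).congr_deriv ?_
    simp only [G', Pi.mul_apply, Pi.pow_apply]
    rw [e1 x hx, e2 x hx]; push_cast; ring
  have hG'c : ContinuousOn G' (Set.Icc (-1 : ℝ) 1) := by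
    have := cu.continuousOn (s := Set.Icc (-1 : ℝ) 1)
    simp only [G']
    fun_prop
  have hGc : ContinuousOn G (Set.Icc (-1 : ℝ) 1) :=
    fun x hx => (hGd x hx).continuousAt.continuousWithinAt
  rw [← us_ibp d hd G G' hGd hG'c]
  apply integral_mono_ae
  · apply us_integrable d hd
    have hh : ContinuousOn (fun x => u1 x / u x) (Set.Icc (-1 : ℝ) 1) := ch1
    fun_prop
  · apply us_integrable d hd
    fun_prop
  · filter_upwards [us_ae' d] with x hx
    change (1 - x ^ 2) * (2 * h1 x * ((1 - x ^ 2) * u3 x - (2 + d) * x * u2 x - d * u1 x)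
      - h1 x ^ 2 * ((1 - x ^ 2) * u2 x - d * x * u1 x))
      - 2 * d * ((1 - x ^ 2) * u2 x - d * x * u1 x) * (log (u x) + 1) ≤ _
    simp only [G, G']
    rw [e1 x hx, e2 x hx, e3 x hx, us_alg _ _ _ _ _ _ _ b hb]
    have hup := hpos x hx
    have hq : 0 ≤ h2 x ^ 2 + 3 * b * h1 x ^ 2 * h2 x + b * h1 x ^ 4 := by
      have : h2 x ^ 2 + 3 * b * h1 x ^ 2 * h2 x + b * h1 x ^ 4
        = (h2 x + 3 * b / 2 * h1 x ^ 2) ^ 2 + b * (1 - 9 / 4 * b) * h1 x ^ 4 := by ring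
      rw [this]
      have : 0 ≤ 1 - 9 / 4 * b := by linarith
      positivity
    have : 0 ≤ 2 * u x * (1 - x ^ 2) ^ 2 *
      (h2 x ^ 2 + 3 * b * h1 x ^ 2 * h2 x + b * h1 x ^ 4) := by positivity
    linarith

lemma us_maxprin (d : ℕ) (U Ux Uxx Ur : ℝ → ℝ → ℝ)
    (hc : Continuous (Function.uncurry U))
    (hx : ∀ r x, HasDerivAt (fun x => U r x) (Ux r x) x)
    (hxx : ∀ r x, HasDerivAt (fun x => Ux r x) (Uxx r x) x)
    (hr : ∀ r x, HasDerivAt (fun r => U r x) (Ur r x) r)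
    (pde : ∀ r x, r * Ur r x = -((1 - x ^ 2) * Uxx r x - d * x * Ux r x))
    (ε : ℝ) (h0 : ∀ x ∈ Set.Icc (-1 : ℝ) 1, ε ≤ U 0 x) (h1 : ∀ x ∈ Set.Icc (-1 : ℝ) 1, ε ≤ U 1 x) :
    ∀ r ∈ Set.Icc (0 : ℝ) 1, ∀ x ∈ Set.Icc (-1 : ℝ) 1, ε ≤ U r x := by
  have main : ∀ δ > 0, ∀ r ∈ Set.Icc (0 : ℝ) 1, ∀ x ∈ Set.Icc (-1 : ℝ) 1,
      ε - δ ≤ U r x - δ * r := by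
    intro δ hδ
    have hK : IsCompact (Set.Icc (0 : ℝ) 1 ×ˢ Set.Icc (-1 : ℝ) 1) := isCompact_Icc.prod isCompact_Icc
    have hcW : Continuous (fun p : ℝ × ℝ => U p.1 p.2 - δ * p.1) := by
      have : Continuous (fun p : ℝ × ℝ => U p.1 p.2) := hc
      fun_prop
    obtain ⟨⟨r0, x0⟩, ⟨hr0, hx0⟩, hmin⟩ := hK.exists_isMinOn ⟨(0, 0), by simp⟩ hcW.continuousOn
    simp only at hr0 hx0
    have hmin' : ∀ r ∈ Set.Icc (0 : ℝ) 1, ∀ x ∈ Set.Icc (-1 : ℝ) 1,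
      U r0 x0 - δ * r0 ≤ U r x - δ * r := fun r hr x hx => hmin (Set.mk_mem_prod hr hx)
    suffices ε - δ ≤ U r0 x0 - δ * r0 from fun r hr x hx => this.trans (hmin' r hr x hx)
    rcases hr0.1.eq_or_lt with h | hr00
    · rw [← h]; linarith [h0 x0 hx0]
    rcases hr0.2.eq_or_lt with h | hr01
    · rw [h]; linarith [h1 x0 hx0]
    exfalso
    have hdr : Ur r0 x0 - δ = 0 := by
      have hl : IsLocalMin (fun r => U r x0 - δ * r) r0 := by
        filter_upwards [Icc_mem_nhds hr00 hr01] with r hr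
        exact hmin' r hr x0 hx0
      have := hl.hasDerivAt_eq_zero ((hr r0 x0).sub ((hasDerivAt_id r0).const_mul δ))
      simpa using this
    have hxmin : IsMinOn (fun x => U r0 x) (Set.Icc (-1 : ℝ) 1) x0 := by
      intro x hx
      have := hmin' r0 hr0 x hx
      simp only [Set.mem_ofPred_eq]; linarith
    have hdir : ∀ y ∈ Set.Icc (-1 : ℝ) 1, 0 ≤ (y - x0) * Ux r0 x0 := by
      intro y hy
      have hseg : segment ℝ x0 (x0 + (y - x0)) ⊆ Set.Icc (-1 : ℝ) 1 := by
        rw [add_sub_cancel]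
        exact (convex_Icc _ _).segment_subset hx0 hy
      have := hxmin.localize.hasFDerivWithinAt_nonneg
        (hx r0 x0).hasFDerivAt.hasFDerivWithinAt
        (mem_posTangentConeAt_of_segment_subset hseg)
      simpa using this
    have hA : 0 ≤ -(x0 * Ux r0 x0) := by
      have := hdir 0 (by norm_num); linarith
    have hB : 0 ≤ (1 - x0 ^ 2) * Uxx r0 x0 := by
      by_cases hint : x0 ∈ Set.Ioo (-1 : ℝ) 1
      · have hz : Ux r0 x0 = 0 := by
          have a1 := hdir 1 (by norm_num)
          have a2 := hdir (-1) (by norm_num)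
          have b1 := hint.1
          have b2 := hint.2
          apply le_antisymm <;> nlinarith
        have hp : 0 ≤ 1 - x0 ^ 2 := by nlinarith [hint.1, hint.2]
        refine mul_nonneg hp ?_
        by_contra hneg
        push Not at hneg
        have d1 : deriv (fun x => U r0 x) = fun x => Ux r0 x := funext fun x => (hx r0 x).deriv
        have hmax : IsLocalMax (fun x => U r0 x) x0 := by
          apply isLocalMax_of_deriv_deriv_neg
          · rw [d1, (hxx r0 x0).deriv]; exact hneg
          · rw [d1]; exact hz
          · exact (hx r0 x0).continuousAt
        have hmn : IsLocalMin (fun x => U r0 x) x0 :=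
          hxmin.isLocalMin (Icc_mem_nhds hint.1 hint.2)
        have hconst : (fun x => U r0 x) =ᶠ[nhds x0] fun _ => U r0 x0 := by
          filter_upwards [hmax, hmn] with x a b
          exact le_antisymm a b
        have h2 := hconst.deriv.deriv_eq
        rw [d1, (hxx r0 x0).deriv] at h2
        simp at h2
        linarith
      · have : x0 ^ 2 = 1 := by
          rcases hx0.1.eq_or_lt with h | h
          · rw [← h]; norm_num
          · rcases hx0.2.eq_or_lt with h' | h'
            · rw [h']; norm_num
            · exact absurd ⟨h, h'⟩ hint
        rw [this]; simp
    have hp := pde r0 x0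
    have hdn : (0 : ℝ) ≤ d := Nat.cast_nonneg d
    have : 0 < r0 * Ur r0 x0 := by
      have : Ur r0 x0 = δ := by linarith
      rw [this]; positivity
    nlinarith [mul_nonneg hdn hA]
  intro r hr x hx
  apply le_of_forall_pos_le_add
  intro δ hδ
  have := main δ hδ r hr x hx
  nlinarith [hr.1]

lemma us_mono (d : ℕ) (hd : 1 ≤ d) (U Ux Uxx Uxxx Ur Urx : ℝ → ℝ → ℝ)
    (hc : Continuous (Function.uncurry U)) (hcx : Continuous (Function.uncurry Ux))
    (hcr : Continuous (Function.uncurry Ur)) (hcrx : Continuous (Function.uncurry Urx))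
    (hx : ∀ r x, HasDerivAt (fun x => U r x) (Ux r x) x)
    (hxx : ∀ r x, HasDerivAt (fun x => Ux r x) (Uxx r x) x)
    (hxxx : ∀ r x, HasDerivAt (fun x => Uxx r x) (Uxxx r x) x)
    (hcxxx : ∀ r, Continuous (Uxxx r))
    (hr : ∀ r x, HasDerivAt (fun r => U r x) (Ur r x) r)
    (hrx : ∀ r x, HasDerivAt (fun r => Ux r x) (Urx r x) r)
    (hrx' : ∀ r x, HasDerivAt (fun x => Ur r x) (Urx r x) x)
    (pde : ∀ r x, r * Ur r x = -((1 - x ^ 2) * Uxx r x - d * x * Ux r x))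
    (hpos : ∀ r ∈ Set.Icc (0 : ℝ) 1, ∀ x ∈ Set.Icc (-1 : ℝ) 1, 0 < U r x) :
    ∫ x, ((1 - x ^ 2) * (Ux 0 x ^ 2 / U 0 x) - 2 * d * (U 0 x * log (U 0 x))) ∂(nuMeas d) ≤
    ∫ x, ((1 - x ^ 2) * (Ux 1 x ^ 2 / U 1 x) - 2 * d * (U 1 x * log (U 1 x))) ∂(nuMeas d) := by
  have := us_prob d hd
  let F : ℝ → ℝ → ℝ := fun r x =>
    (1 - x ^ 2) * (Ux r x ^ 2 / U r x) - 2 * d * (U r x * log (U r x))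
  let F' : ℝ → ℝ → ℝ := fun r x =>
    (1 - x ^ 2) * (2 * (Ux r x / U r x) * Urx r x - (Ux r x / U r x) ^ 2 * Ur r x)
      - 2 * d * Ur r x * (log (U r x) + 1)
  let K := Set.Icc (0 : ℝ) 1 ×ˢ Set.Icc (-1 : ℝ) 1
  have hK : IsCompact K := isCompact_Icc.prod isCompact_Icc
  have c0 : ContinuousOn (fun p : ℝ × ℝ => U p.1 p.2) K := hc.continuousOn
  have c1 : ContinuousOn (fun p : ℝ × ℝ => Ux p.1 p.2) K := hcx.continuousOn
  have c2 : ContinuousOn (fun p : ℝ × ℝ => Ur p.1 p.2) K := hcr.continuousOn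
  have c3 : ContinuousOn (fun p : ℝ × ℝ => Urx p.1 p.2) K := hcrx.continuousOn
  have hneK : ∀ p ∈ K, U p.1 p.2 ≠ 0 := fun p hp => (hpos p.1 hp.1 p.2 hp.2).ne'
  have cl : ContinuousOn (fun p : ℝ × ℝ => log (U p.1 p.2)) K := c0.log hneK
  have cd : ContinuousOn (fun p : ℝ × ℝ => Ux p.1 p.2 / U p.1 p.2) K := c1.div c0 hneK
  have cd2 : ContinuousOn (fun p : ℝ × ℝ => Ux p.1 p.2 ^ 2 / U p.1 p.2) K := (c1.pow 2).div c0 hneK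
  have hFK : ContinuousOn (fun p : ℝ × ℝ => F p.1 p.2) K := by
    simp only [F]; fun_prop
  have hF'K : ContinuousOn (fun p : ℝ × ℝ => F' p.1 p.2) K := by
    simp only [F']; fun_prop
  have sx : ∀ (H : ℝ → ℝ → ℝ), ContinuousOn (fun p : ℝ × ℝ => H p.1 p.2) K →
      ∀ r ∈ Set.Icc (0 : ℝ) 1, ContinuousOn (H r) (Set.Icc (-1 : ℝ) 1) := by
    intro H hH r hr
    exact hH.comp (f := fun x => (r, x)) (by fun_prop) (fun x hx => Set.mk_mem_prod hr hx)
  have sr : ∀ (H : ℝ → ℝ → ℝ), ContinuousOn (fun p : ℝ × ℝ => H p.1 p.2) K →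
      ∀ x ∈ Set.Icc (-1 : ℝ) 1, ContinuousOn (fun r => H r x) (Set.Icc (0 : ℝ) 1) := by
    intro H hH x hx
    exact hH.comp (f := fun r => (r, x)) (by fun_prop) (fun r hr => Set.mk_mem_prod hr hx)
  obtain ⟨C, hC⟩ := hK.exists_bound_of_continuousOn hFK
  obtain ⟨C', hC'⟩ := hK.exists_bound_of_continuousOn hF'K
  have hcont : ContinuousOn (fun r => ∫ x, F r x ∂(nuMeas d)) (Set.Icc (0 : ℝ) 1) := by
    apply continuousOn_of_dominated (bound := fun _ => C)
    · intro r hr; exact (us_integrable d hd _ (sx F hFK r hr)).aestronglyMeasurable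
    · intro r hr
      filter_upwards [us_ae' d] with x hx using hC (r, x) (Set.mk_mem_prod hr hx)
    · exact integrable_const _
    · filter_upwards [us_ae' d] with x hx using sr F hFK x hx
  have hder : ∀ r ∈ Set.Ioo (0 : ℝ) 1,
      HasDerivAt (fun r => ∫ x, F r x ∂(nuMeas d)) (∫ x, F' r x ∂(nuMeas d)) r := by
    intro r hr0
    refine (hasDerivAt_integral_of_dominated_loc_of_deriv_le (s := Set.Icc (0 : ℝ) 1)
      (bound := fun _ => C') (Icc_mem_nhds hr0.1 hr0.2) ?_ ?_ ?_ ?_ ?_ ?_).2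
    · filter_upwards [Icc_mem_nhds hr0.1 hr0.2] with r hr
      exact (us_integrable d hd _ (sx F hFK r hr)).aestronglyMeasurable
    · exact us_integrable d hd _ (sx F hFK r (Set.Ioo_subset_Icc_self hr0))
    · exact (us_integrable d hd _
        (sx F' hF'K r (Set.Ioo_subset_Icc_self hr0))).aestronglyMeasurable
    · filter_upwards [us_ae' d] with x hx r hr using hC' (r, x) (Set.mk_mem_prod hr hx)
    · exact integrable_const _
    · filter_upwards [us_ae' d] with x hx r hrr
      have hne : U r x ≠ 0 := (hpos r hrr x hx).ne'
      have a := ((((hrx r x).pow 2).div (hr r x) hne).const_mul (1 - x ^ 2)).sub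
        (((hr r x).mul ((hr r x).log hne)).const_mul (2 * (d : ℝ)))
      refine a.congr_deriv ?_
      simp only [F', Pi.pow_apply]
      field_simp
      ring
  have hmono : MonotoneOn (fun r => ∫ x, F r x ∂(nuMeas d)) (Set.Icc (0 : ℝ) 1) := by
    apply monotoneOn_of_deriv_nonneg (convex_Icc _ _) hcont
    · rw [interior_Icc]; intro r hr
      exact (hder r hr).differentiableAt.differentiableWithinAt
    · rw [interior_Icc]; intro r hr0
      rw [(hder r hr0).deriv]
      have hrc := Set.Ioo_subset_Icc_self hr0
      have key := us_key d hd (U r) (Ux r) (Uxx r) (Uxxx r) (hx r) (hxx r) (hxxx r) (hcxxx r)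
        (hpos r hrc)
      have pde2 : ∀ x, r * Urx r x =
          -((1 - x ^ 2) * Uxxx r x - (2 + d) * x * Uxx r x - d * Ux r x) := by
        intro x
        have a := (hrx' r x).const_mul r
        have dnu : HasDerivAt (fun x : ℝ => 1 - x ^ 2) (-(2 * x)) x := by
          simpa using ((hasDerivAt_id x).pow 2).const_sub 1
        have b := ((dnu.mul (hxxx r x)).sub
          (((hasDerivAt_id x).const_mul (d : ℝ)).mul (hxx r x))).neg
        have e : (fun x => r * Ur r x) = -(((fun x : ℝ => 1 - x ^ 2) * fun x => Uxx r x) -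
            (fun y : ℝ => (d : ℝ) * id y) * fun x => Ux r x) := by
          funext y; simp [pde]
        rw [e] at a
        rw [a.unique b]
        simp; ring
      have : r * ∫ x, F' r x ∂(nuMeas d) = -∫ x, ((1 - x ^ 2) * (2 * (Ux r x / U r x) *
          ((1 - x ^ 2) * Uxxx r x - (2 + d) * x * Uxx r x - d * Ux r x)
          - (Ux r x / U r x) ^ 2 * ((1 - x ^ 2) * Uxx r x - d * x * Ux r x))
          - 2 * d * ((1 - x ^ 2) * Uxx r x - d * x * Ux r x) * (log (U r x) + 1)) ∂(nuMeas d) := by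
        rw [← integral_const_mul, ← integral_neg]
        congr 1
        funext x
        simp only [F']
        linear_combination ((1 - x ^ 2) * (2 * (Ux r x / U r x))) * pde2 x
          + (-(1 - x ^ 2) * (Ux r x / U r x) ^ 2 - 2 * d * (log (U r x) + 1)) * pde r x
      have h3 : 0 ≤ r * ∫ x, F' r x ∂(nuMeas d) := by rw [this]; linarith
      exact nonneg_of_mul_nonneg_right h3 hr0.1
  exact hmono (by norm_num) (by norm_num) zero_le_one

open Polynomial in
/-- The ultraspherical operator on polynomials. -/
def usL (d : ℕ) : ℝ[X] →ₗ[ℝ] ℝ[X] :=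
  LinearMap.mulLeft ℝ (1 - X ^ 2 : ℝ[X]) ∘ₗ derivative ∘ₗ derivative
    - LinearMap.mulLeft ℝ (C (d : ℝ) * X) ∘ₗ derivative

def usLam (d k : ℕ) : ℕ := k * (k + (d - 1))

lemma us_lam_cast (d k : ℕ) (hd : 1 ≤ d) : (usLam d k : ℝ) = k * (k + (d - 1)) := by
  unfold usLam; push_cast [Nat.cast_sub hd]; ring

lemma us_lam_lt (d k n : ℕ) (h : k < n) : usLam d k < usLam d n := by
  unfold usLam; nlinarith [Nat.zero_le (d - 1)]

open Polynomial in
lemma usL_eval (d : ℕ) (p : ℝ[X]) (x : ℝ) : (usL d p).eval x =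
    (1 - x ^ 2) * (derivative (derivative p)).eval x - d * x * (derivative p).eval x := by
  simp [usL]; ring

open Polynomial in
lemma usL_X_pow (d N : ℕ) (hd : 1 ≤ d) :
    usL d (X ^ N) + (usLam d N : ℝ) • X ^ N = C ((N : ℝ) * (N - 1)) * X ^ (N - 2) := by
  apply Polynomial.funext
  intro x
  rw [eval_add, usL_eval, us_lam_cast d N hd]
  rcases N with _ | _ | n
  · simp
  · simp
  · simp; ring_nf

open Polynomial in
lemma us_decomp (d : ℕ) (hd : 1 ≤ d) (N : ℕ) : ∀ p : ℝ[X], (∀ m, N ≤ m → p.coeff m = 0) →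
    ∃ q : ℕ → ℝ[X], (∀ k, (q k).natDegree ≤ k) ∧
      (∀ k, usL d (q k) = -((usLam d k : ℝ) • q k)) ∧ p = ∑ k ∈ Finset.range N, q k := by
  induction N with
  | zero =>
    intro p hp
    refine ⟨fun _ => 0, by simp, by simp, ?_⟩
    ext m; simpa using hp m (Nat.zero_le m)
  | succ N ih =>
    intro p hp
    obtain ⟨q, hq1, hq2, hq3⟩ := ih (usL d (X ^ N) + (usLam d N : ℝ) • X ^ N) (by
      intro m hm
      rw [usL_X_pow d N hd, coeff_C_mul, coeff_X_pow]
      rcases N with _ | _ | n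
      · simp
      · simp
      · rw [if_neg (by omega)]; simp)
    obtain ⟨s, hs1, hs2, hs3⟩ := ih (p - C (p.coeff N) * X ^ N) (by
      intro m hm
      rw [coeff_sub, coeff_C_mul, coeff_X_pow]
      by_cases h : m = N
      · simp [h]
      · simp [h, hp m (by omega)])
    set c : ℕ → ℝ := fun k => ((usLam d N : ℝ) - usLam d k)⁻¹ with hc
    set G : ℝ[X] := X ^ N - ∑ k ∈ Finset.range N, c k • q k with hG
    have hGdeg : G.natDegree ≤ N := by
      refine (natDegree_sub_le _ _).trans (max_le (natDegree_X_pow_le N) ?_)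
      refine natDegree_sum_le_of_forall_le _ _ fun k hk => ?_
      exact (natDegree_smul_le _ _).trans ((hq1 k).trans (Finset.mem_range.1 hk).le)
    have hGL : usL d G = -((usLam d N : ℝ) • G) := by
      have h1 : usL d G = usL d (X ^ N) - ∑ k ∈ Finset.range N, c k • usL d (q k) := by
        rw [hG, map_sub, map_sum]; simp only [map_smul]
      have h2 : ∑ k ∈ Finset.range N, c k • usL d (q k) =
          (usLam d N : ℝ) • (X ^ N - G) * (-1 : ℝ[X]) + ∑ k ∈ Finset.range N, q k := by
        rw [hG, sub_sub_cancel, Finset.smul_sum, Finset.sum_mul, ← Finset.sum_add_distrib]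
        apply Finset.sum_congr rfl
        intro k hk
        have hlt : (usLam d k : ℝ) < usLam d N := by
          exact_mod_cast us_lam_lt d k N (Finset.mem_range.1 hk)
        have hne : (usLam d N : ℝ) - usLam d k ≠ 0 := by linarith
        have : q k = (c k * (usLam d N - usLam d k)) • q k := by
          rw [hc]; simp only; rw [inv_mul_cancel₀ hne, one_smul]
        rw [hq2 k]
        nth_rewrite 3 [this]
        simp only [smul_neg, smul_smul, mul_neg, mul_one]
        rw [← neg_smul, ← neg_smul, ← add_smul]
        congr 1; ring
      rw [h1, h2, ← hq3]
      simp only [smul_sub, mul_neg, mul_one]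
      ring
    refine ⟨fun k => if k = N then p.coeff N • G else s k + (p.coeff N * c k) • q k, ?_, ?_, ?_⟩
    · intro k
      by_cases h : k = N
      · simp only [h, if_true]; exact (natDegree_smul_le _ _).trans hGdeg
      · simp only [h, if_false]
        refine (natDegree_add_le _ _).trans (max_le (hs1 k) ((natDegree_smul_le _ _).trans (hq1 k)))
    · intro k
      by_cases h : k = N
      · simp only [h, if_true]; rw [map_smul, hGL, smul_neg, smul_comm]
      · simp only [h, if_false]
        rw [map_add, map_smul, hq2, hs2, smul_add, smul_neg, neg_add, smul_comm]
    · rw [Finset.sum_range_succ]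
      simp only [if_true]
      have : ∑ k ∈ Finset.range N, (if k = N then p.coeff N • G else s k + (p.coeff N * c k) • q k)
          = ∑ k ∈ Finset.range N, (s k + (p.coeff N * c k) • q k) :=
        Finset.sum_congr rfl fun k hk => if_neg (Finset.mem_range.1 hk).ne
      rw [this, Finset.sum_add_distrib, ← hs3, hG, smul_sub, Finset.smul_sum]
      simp only [smul_eq_C_mul, C_mul, mul_assoc]
      ring

/-- finite sums of separated terms -/
def usS (N : ℕ) (a : ℕ → ℝ → ℝ) (q : ℕ → Polynomial ℝ) (r x : ℝ) : ℝ :=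
  ∑ k ∈ Finset.range N, a k r * (q k).eval x

lemma usS_cont (N : ℕ) (a : ℕ → ℝ → ℝ) (q : ℕ → Polynomial ℝ) (ha : ∀ k, Continuous (a k)) :
    Continuous (Function.uncurry (usS N a q)) := by
  unfold usS Function.uncurry
  have := fun k => (q k).continuous
  fun_prop

lemma usS_dx (N : ℕ) (a : ℕ → ℝ → ℝ) (q : ℕ → Polynomial ℝ) (r x : ℝ) :
    HasDerivAt (fun x => usS N a q r x) (usS N a (fun k => Polynomial.derivative (q k)) r x) x := by
  unfold usS
  exact HasDerivAt.fun_sum fun k _ => ((q k).hasDerivAt x).const_mul _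

lemma usS_dr (N : ℕ) (a a' : ℕ → ℝ → ℝ) (q : ℕ → Polynomial ℝ)
    (ha : ∀ k r, HasDerivAt (a k) (a' k r) r) (r x : ℝ) :
    HasDerivAt (fun r => usS N a q r x) (usS N a' q r x) r := by
  unfold usS
  exact HasDerivAt.fun_sum fun k _ => (ha k r).mul_const _

open Polynomial in
lemma us_poly (d : ℕ) (hd : 1 ≤ d) (p : ℝ[X]) (hp : ∀ x ∈ Set.Icc (-1 : ℝ) 1, 0 < p.eval x) :
    2 * d * (∫ x, p.eval x * log (p.eval x) ∂(nuMeas d)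
      - (∫ x, p.eval x ∂(nuMeas d)) * log (∫ x, p.eval x ∂(nuMeas d))) ≤
    ∫ x, (1 - x ^ 2) * ((derivative p).eval x ^ 2 / p.eval x) ∂(nuMeas d) := by
  have hprob := us_prob d hd
  obtain ⟨q, hq1, hq2, hq3⟩ := us_decomp d hd (p.natDegree + 1) p
    (fun m hm => coeff_eq_zero_of_natDegree_lt hm)
  set N := p.natDegree + 1 with hN
  obtain ⟨x0, hx0, hmin⟩ := isCompact_Icc.exists_isMinOn (s := Set.Icc (-1 : ℝ) 1)
    ⟨0, by norm_num⟩ p.continuous.continuousOn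
  set ε := p.eval x0 with hε
  have hεpos : 0 < ε := hp x0 hx0
  have hεle : ∀ x ∈ Set.Icc (-1 : ℝ) 1, ε ≤ p.eval x := fun x hx => hmin hx
  have pint : ∀ s : ℝ[X], Integrable (fun x => s.eval x) (nuMeas d) :=
    fun s => us_integrable d hd _ s.continuous.continuousOn
  have hq0 : q 0 = C ((q 0).coeff 0) := eq_C_of_natDegree_le_zero (hq1 0)
  set c := (q 0).coeff 0 with hcdef
  have hlam0 : ∀ k, k ≠ 0 → usLam d k ≠ 0 := by
    intro k hk
    have := us_lam_lt d 0 k (Nat.pos_of_ne_zero hk)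
    omega
  have hlam00 : usLam d 0 = 0 := by simp [usLam]
  have hqint : ∀ k, k ≠ 0 → ∫ x, (q k).eval x ∂(nuMeas d) = 0 := by
    intro k hk
    have h := us_ibp d hd (fun x => (derivative (q k)).eval x)
      (fun x => (derivative (derivative (q k))).eval x) (fun x _ => (derivative (q k)).hasDerivAt x)
      (Polynomial.continuous _).continuousOn
    simp only [← usL_eval, hq2 k, eval_neg, eval_smul, smul_eq_mul] at h
    rw [integral_neg, integral_const_mul] at h
    have hl : (usLam d k : ℝ) ≠ 0 := by exact_mod_cast hlam0 k hk
    simpa [hl] using h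
  have hmean : ∫ x, p.eval x ∂(nuMeas d) = c := by
    have : ∀ x, p.eval x = ∑ k ∈ Finset.range N, (q k).eval x := by
      intro x; conv_lhs => rw [hq3]
      rw [eval_finsetSum]
    simp only [this]
    rw [integral_finsetSum _ (fun k _ => pint (q k)), Finset.sum_eq_single 0]
    · rw [hq0]; simp
    · intro k _ hk; exact hqint k hk
    · intro h; simp [hN] at h
  have hcε : ε ≤ c := by
    rw [← hmean]
    have : ∫ _x, ε ∂(nuMeas d) ≤ ∫ x, p.eval x ∂(nuMeas d) := by
      apply integral_mono_ae (integrable_const _) (pint p)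
      filter_upwards [us_ae' d] with x hx using hεle x hx
    simpa using this
  let a : ℕ → ℝ → ℝ := fun k r => r ^ usLam d k
  let a' : ℕ → ℝ → ℝ := fun k r => usLam d k * r ^ (usLam d k - 1)
  have haa : ∀ k r, HasDerivAt (a k) (a' k r) r := fun k r => hasDerivAt_pow _ _
  have ca : ∀ k, Continuous (a k) := fun k => by simp only [a]; fun_prop
  have ca' : ∀ k, Continuous (a' k) := fun k => by simp only [a']; fun_prop
  let q1 : ℕ → ℝ[X] := fun k => derivative (q k)
  let q2 : ℕ → ℝ[X] := fun k => derivative (q1 k)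
  let q3 : ℕ → ℝ[X] := fun k => derivative (q2 k)
  have pde : ∀ r x, r * usS N a' q r x =
      -((1 - x ^ 2) * usS N a q2 r x - d * x * usS N a q1 r x) := by
    intro r x
    simp only [usS, Finset.mul_sum]
    rw [← Finset.sum_sub_distrib, ← Finset.sum_neg_distrib]
    apply Finset.sum_congr rfl
    intro k _
    have h := usL_eval d (q k) x
    rw [hq2 k, eval_neg, eval_smul, smul_eq_mul] at h
    have hr : r * a' k r = usLam d k * a k r := by
      simp only [a, a']
      rcases hz : usLam d k with _ | m
      · simp
      · simp [pow_succ]; ring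
    simp only [q1, q2]
    linear_combination ((q k).eval x) * hr - a k r * h
  have U1 : ∀ x, usS N a q 1 x = p.eval x := by
    intro x; conv_rhs => rw [hq3]
    simp [usS, a, eval_finsetSum]
  have U1' : ∀ x, usS N a q1 1 x = (derivative p).eval x := by
    intro x; conv_rhs => rw [hq3]
    simp [usS, a, q1, derivative_sum, eval_finsetSum]
  have U0g : ∀ (s : ℕ → ℝ[X]) x, usS N a s 0 x = (s 0).eval x := by
    intro s x
    simp only [usS, a]
    rw [Finset.sum_eq_single 0]
    · simp [hlam00]
    · intro k _ hk; simp [hlam0 k hk]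
    · intro h; simp [hN] at h
  have U0 : ∀ x, usS N a q 0 x = c := by intro x; rw [U0g, hq0]; simp
  have U0' : ∀ x, usS N a q1 0 x = 0 := by
    intro x; rw [U0g]; simp only [q1]; rw [hq0]; simp
  have hpos := us_maxprin d (usS N a q) (usS N a q1) (usS N a q2) (usS N a' q)
    (usS_cont N a q ca) (usS_dx N a q) (usS_dx N a q1) (usS_dr N a a' q haa) pde ε
    (fun x _ => by rw [U0]; exact hcε) (fun x hx => by rw [U1]; exact hεle x hx)
  have main := us_mono d hd (usS N a q) (usS N a q1) (usS N a q2) (usS N a q3) (usS N a' q)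
    (usS N a' q1) (usS_cont N a q ca) (usS_cont N a q1 ca) (usS_cont N a' q ca')
    (usS_cont N a' q1 ca') (usS_dx N a q) (usS_dx N a q1) (usS_dx N a q2)
    (fun r => (usS_cont N a q3 ca).comp (by fun_prop : Continuous fun x : ℝ => (r, x)))
    (usS_dr N a a' q haa) (usS_dr N a a' q1 haa) (usS_dx N a' q) pde
    (fun r hr x hx => hεpos.trans_le (hpos r hr x hx))
  simp only [U0, U0', U1, U1'] at main
  rw [hmean]
  have hne : ∀ x ∈ Set.Icc (-1 : ℝ) 1, p.eval x ≠ 0 := fun x hx => (hp x hx).ne'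
  have cp : ContinuousOn (fun x => p.eval x) (Set.Icc (-1 : ℝ) 1) := p.continuous.continuousOn
  have cp' : ContinuousOn (fun x => (derivative p).eval x) (Set.Icc (-1 : ℝ) 1) :=
    (derivative p).continuous.continuousOn
  simp at main
  rw [integral_sub, integral_const_mul (2 * (d : ℝ))] at main
  · have e : ∀ A B : ℝ, 2 * (d : ℝ) * (A - B) = 2 * d * A - 2 * d * B := fun A B => by ring
    rw [e]; linarith
  · apply us_integrable d hd
    have : ContinuousOn (fun x => (derivative p).eval x ^ 2 / p.eval x) (Set.Icc (-1 : ℝ) 1) :=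
      (cp'.pow 2).div cp hne
    fun_prop
  · apply us_integrable d hd
    exact (cp.mul (cp.log hne)).const_mul _

open Polynomial in
lemma us_antideriv (p : ℝ[X]) : ∃ P : ℝ[X], derivative P = p := by
  induction p using Polynomial.induction_on' with
  | add p q hp hq =>
    obtain ⟨P, rfl⟩ := hp
    obtain ⟨Q, rfl⟩ := hq
    exact ⟨P + Q, by simp⟩
  | monomial n a =>
    refine ⟨monomial (n + 1) (a / (n + 1)), ?_⟩
    rw [derivative_monomial]
    have : (n : ℝ) + 1 ≠ 0 := by positivity
    simp [this]

lemma us_tendsto (d : ℕ) (hd : 1 ≤ d) (H : ℕ → ℝ → ℝ) (h : ℝ → ℝ) (C : ℝ)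
    (hc : ∀ n, ContinuousOn (H n) (Set.Icc (-1 : ℝ) 1))
    (hC : ∀ n, ∀ x ∈ Set.Icc (-1 : ℝ) 1, |H n x| ≤ C)
    (ht : ∀ x ∈ Set.Icc (-1 : ℝ) 1, Filter.Tendsto (fun n => H n x) Filter.atTop (nhds (h x))) :
    Filter.Tendsto (fun n => ∫ x, H n x ∂(nuMeas d)) Filter.atTop (nhds (∫ x, h x ∂(nuMeas d))) := by
  have := us_prob d hd
  apply tendsto_integral_of_dominated_convergence (fun _ => C)
  · intro n; exact (us_integrable d hd _ (hc n)).aestronglyMeasurable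
  · exact integrable_const _
  · intro n; filter_upwards [us_ae' d] with x hx using hC n x hx
  · filter_upwards [us_ae' d] with x hx using ht x hx

open Polynomial in
lemma us_approx (f : ℝ → ℝ) (hf : ContDiffOn ℝ 1 f (Set.Icc (-1 : ℝ) 1)) (η : ℝ) (hη : 0 < η) :
    ∃ P : ℝ[X], ∀ x ∈ Set.Icc (-1 : ℝ) 1, |P.eval x - f x| ≤ η ∧
      |(derivative P).eval x - derivWithin f (Set.Icc (-1 : ℝ) 1) x| ≤ η := by
  have hu : UniqueDiffOn ℝ (Set.Icc (-1 : ℝ) 1) := uniqueDiffOn_Icc (by norm_num)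
  have hc := hf.continuousOn_derivWithin hu le_rfl
  obtain ⟨p, hp⟩ := exists_polynomial_near_of_continuousOn (-1) 1 _ hc (η / 2) (by positivity)
  obtain ⟨P0, hP0⟩ := us_antideriv p
  refine ⟨P0 + C (f 0 - P0.eval 0), fun x hx => ⟨?_, ?_⟩⟩
  · have hd : ∀ y ∈ Set.Icc (-1 : ℝ) 1, HasDerivWithinAt (fun y => P0.eval y - f y)
        (p.eval y - derivWithin f (Set.Icc (-1 : ℝ) 1) y) (Set.Icc (-1 : ℝ) 1) y := by
      intro y hy
      have h1 := (P0.hasDerivAt y).hasDerivWithinAt (s := Set.Icc (-1 : ℝ) 1)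
      rw [hP0] at h1
      exact h1.sub ((hf.differentiableOn (by norm_num)) y hy).hasDerivWithinAt
    have h := (convex_Icc (-1 : ℝ) 1).norm_image_sub_le_of_norm_hasDerivWithin_le hd
      (fun y hy => (hp y hy).le) (show (0 : ℝ) ∈ Set.Icc (-1 : ℝ) 1 by norm_num) hx
    simp only [Real.norm_eq_abs, sub_zero] at h
    have hx1 : |x| ≤ 1 := abs_le.2 hx
    have e : (P0 + C (f 0 - P0.eval 0)).eval x - f x
        = P0.eval x - f x - (P0.eval 0 - f 0) := by simp; ring
    rw [e]
    nlinarith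
  · have : derivative (P0 + C (f 0 - P0.eval 0)) = p := by simp [hP0]
    rw [this]
    linarith [hp x hx]

open Polynomial in
lemma us_poly_sq (d : ℕ) (hd : 1 ≤ d) (P : ℝ[X]) (ε : ℝ) (hε : 0 < ε) :
    2 * d * (∫ x, (P.eval x ^ 2 + ε) * log (P.eval x ^ 2 + ε) ∂(nuMeas d)
      - (∫ x, (P.eval x ^ 2 + ε) ∂(nuMeas d)) * log (∫ x, (P.eval x ^ 2 + ε) ∂(nuMeas d))) ≤
    4 * ∫ x, (derivative P).eval x ^ 2 * (1 - x ^ 2) ∂(nuMeas d) := by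
  have h := us_poly d hd (P ^ 2 + C ε) (fun x _ => by simp; positivity)
  simp only [eval_add, eval_pow, eval_C] at h
  refine h.trans ?_
  rw [← integral_const_mul]
  have cP := P.continuous
  have cP' := (derivative P).continuous
  have hne : ∀ x, P.eval x ^ 2 + ε ≠ 0 := fun x => by positivity
  apply integral_mono_ae
  · apply us_integrable d hd
    apply Continuous.continuousOn
    have c3 := (derivative (P ^ 2 + C ε)).continuous
    have : Continuous fun x => eval x (derivative (P ^ 2 + C ε)) ^ 2 / (P.eval x ^ 2 + ε) :=
      (c3.pow 2).div (by fun_prop) hne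
    fun_prop
  · apply us_integrable d hd
    apply Continuous.continuousOn
    fun_prop
  · filter_upwards [us_ae d] with x hx
    have hp : 0 < 1 - x ^ 2 := by nlinarith [hx.1, hx.2]
    have e : (derivative (P ^ 2 + C ε)).eval x = 2 * P.eval x * (derivative P).eval x := by
      simp [derivative_pow]
    rw [e]
    have : (2 * P.eval x * (derivative P).eval x) ^ 2 / (P.eval x ^ 2 + ε)
        ≤ 4 * (derivative P).eval x ^ 2 := by
      rw [div_le_iff₀ (by positivity)]
      nlinarith [mul_nonneg hε.le (sq_nonneg ((derivative P).eval x))]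
    nlinarith [mul_le_mul_of_nonneg_left this hp.le]

open Polynomial in
lemma us_main (d : ℕ) (hd : 1 ≤ d) (f : ℝ → ℝ) (hf : ContDiffOn ℝ 1 f (Set.Icc (-1 : ℝ) 1)) :
    2 * d * (∫ x, f x ^ 2 * log (f x ^ 2) ∂(nuMeas d)
      - (∫ x, f x ^ 2 ∂(nuMeas d)) * log (∫ x, f x ^ 2 ∂(nuMeas d))) ≤
    4 * ∫ x, derivWithin f (Set.Icc (-1 : ℝ) 1) x ^ 2 * (1 - x ^ 2) ∂(nuMeas d) := by
  have hu : UniqueDiffOn ℝ (Set.Icc (-1 : ℝ) 1) := uniqueDiffOn_Icc (by norm_num)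
  have hc' := hf.continuousOn_derivWithin hu le_rfl
  set f' := derivWithin f (Set.Icc (-1 : ℝ) 1) with hf'
  let ε : ℕ → ℝ := fun n => 1 / ((n : ℝ) + 1)
  have hε : ∀ n, 0 < ε n := fun n => by simp only [ε]; positivity
  have hε1 : ∀ n, ε n ≤ 1 := fun n => by
    simp only [ε]; rw [div_le_one (by positivity)]; linarith [Nat.cast_nonneg (α := ℝ) n]
  have hε0 : Filter.Tendsto ε Filter.atTop (nhds 0) := tendsto_one_div_add_atTop_nhds_zero_nat
  choose P hP using fun n => us_approx f hf (ε n) (hε n)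
  obtain ⟨M, hM⟩ := isCompact_Icc.exists_bound_of_continuousOn hf.continuousOn
  obtain ⟨M', hM'⟩ := isCompact_Icc.exists_bound_of_continuousOn hc'
  simp only [Real.norm_eq_abs] at hM hM'
  have tP : ∀ x ∈ Set.Icc (-1 : ℝ) 1,
      Filter.Tendsto (fun n => (P n).eval x) Filter.atTop (nhds (f x)) := by
    intro x hx
    rw [tendsto_iff_dist_tendsto_zero]
    exact squeeze_zero (fun _ => dist_nonneg) (fun n => (hP n x hx).1) hε0
  have tP' : ∀ x ∈ Set.Icc (-1 : ℝ) 1,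
      Filter.Tendsto (fun n => (derivative (P n)).eval x) Filter.atTop (nhds (f' x)) := by
    intro x hx
    rw [tendsto_iff_dist_tendsto_zero]
    exact squeeze_zero (fun _ => dist_nonneg) (fun n => (hP n x hx).2) hε0
  have bP : ∀ n, ∀ x ∈ Set.Icc (-1 : ℝ) 1, |(P n).eval x| ≤ M + 1 := by
    intro n x hx
    have h1 := (hP n x hx).1
    have h2 := abs_sub_abs_le_abs_sub ((P n).eval x) (f x)
    linarith [hM x hx, hε1 n]
  have bP' : ∀ n, ∀ x ∈ Set.Icc (-1 : ℝ) 1, |(derivative (P n)).eval x| ≤ M' + 1 := by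
    intro n x hx
    have h1 := (hP n x hx).2
    have h2 := abs_sub_abs_le_abs_sub ((derivative (P n)).eval x) (f' x)
    linarith [hM' x hx, hε1 n]
  have bg : ∀ n, ∀ x ∈ Set.Icc (-1 : ℝ) 1, (P n).eval x ^ 2 + ε n ∈
      Set.Icc (0 : ℝ) ((M + 1) ^ 2 + 1) := by
    intro n x hx
    have h1 := sq_le_sq' (abs_le.1 (bP n x hx)).1 (abs_le.1 (bP n x hx)).2
    have := hε n
    exact ⟨by positivity, by linarith [hε1 n]⟩
  obtain ⟨B, hB⟩ := (isCompact_Icc (a := (0 : ℝ)) (b := (M + 1) ^ 2 + 1)).exists_bound_of_continuousOn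
    Real.continuous_mul_log.continuousOn
  have cP := fun n => (P n).continuous
  have cP' := fun n => (derivative (P n)).continuous
  have tg : ∀ x ∈ Set.Icc (-1 : ℝ) 1,
      Filter.Tendsto (fun n => (P n).eval x ^ 2 + ε n) Filter.atTop (nhds (f x ^ 2)) := by
    intro x hx
    simpa using ((tP x hx).pow 2).add hε0
  have L1 := us_tendsto d hd (fun n x => ((P n).eval x ^ 2 + ε n) * log ((P n).eval x ^ 2 + ε n))
    (fun x => f x ^ 2 * log (f x ^ 2)) B
    (fun n => (Real.continuous_mul_log.comp
      (by fun_prop : Continuous fun x => (P n).eval x ^ 2 + ε n)).continuousOn)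
    (fun n x hx => hB _ (bg n x hx))
    (fun x hx => (Real.continuous_mul_log.tendsto _).comp (tg x hx))
  have L2 := us_tendsto d hd (fun n x => (P n).eval x ^ 2 + ε n) (fun x => f x ^ 2)
    ((M + 1) ^ 2 + 1)
    (fun n => (by fun_prop : Continuous fun x => (P n).eval x ^ 2 + ε n).continuousOn)
    (fun n x hx => by rw [abs_of_nonneg (bg n x hx).1]; exact (bg n x hx).2) tg
  have L3 := us_tendsto d hd (fun n x => (derivative (P n)).eval x ^ 2 * (1 - x ^ 2))
    (fun x => f' x ^ 2 * (1 - x ^ 2)) ((M' + 1) ^ 2)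
    (fun n => (by fun_prop :
      Continuous fun x => (derivative (P n)).eval x ^ 2 * (1 - x ^ 2)).continuousOn)
    (fun n x hx => by
      have h1 := sq_le_sq' (abs_le.1 (bP' n x hx)).1 (abs_le.1 (bP' n x hx)).2
      have hp : 0 ≤ 1 - x ^ 2 := by nlinarith [hx.1, hx.2]
      rw [abs_of_nonneg (by positivity)]
      nlinarith [mul_nonneg (sq_nonneg ((derivative (P n)).eval x)) (sq_nonneg x)])
    (fun x hx => ((tP' x hx).pow 2).mul_const _)
  have L4 := (Real.continuous_mul_log.tendsto _).comp L2
  exact le_of_tendsto_of_tendsto' ((L1.sub L4).const_mul (2 * (d : ℝ))) (L3.const_mul 4)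
    (fun n => us_poly_sq d hd (P n) (ε n) (hε n))

theorem ultraspherical_logSobolev (d : ℕ) (hd : 1 ≤ d)
    (f : ℝ → ℝ) (hf : ContDiffOn ℝ 1 f (Set.Icc (-1 : ℝ) 1))
    (hne : ∃ x ∈ Set.Icc (-1 : ℝ) 1, f x ≠ 0) :
    ∫ x, (deriv f x) ^ 2 * (1 - x ^ 2) ∂(nuMeas d) ≥
      (d / 2) * ∫ x, (f x) ^ 2 *
        Real.log ((f x) ^ 2 / ∫ y, (f y) ^ 2 ∂(nuMeas d)) ∂(nuMeas d) := by
  have hd' : (1 : ℝ) ≤ d := by exact_mod_cast hd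
  have hmain := us_main d hd f hf
  set M := ∫ y, (f y) ^ 2 ∂(nuMeas d) with hM
  have e1 : ∫ x, (deriv f x) ^ 2 * (1 - x ^ 2) ∂(nuMeas d) =
      ∫ x, derivWithin f (Set.Icc (-1 : ℝ) 1) x ^ 2 * (1 - x ^ 2) ∂(nuMeas d) := by
    apply integral_congr_ae
    filter_upwards [us_ae d] with x hx
    rw [derivWithin_of_mem_nhds (Icc_mem_nhds hx.1 hx.2)]
  rw [e1, ge_iff_le]
  have hcf := hf.continuousOn
  by_cases hM0 : M = 0
  · simp only [hM0, div_zero, log_zero, mul_zero, integral_zero]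
    apply integral_nonneg_of_ae
    filter_upwards [us_ae d] with x hx
    have hp : 0 < 1 - x ^ 2 := by nlinarith [hx.1, hx.2]
    simp only [Pi.zero_apply]
    positivity
  · have e2 : ∫ x, (f x) ^ 2 * Real.log ((f x) ^ 2 / M) ∂(nuMeas d) =
        ∫ x, f x ^ 2 * log (f x ^ 2) ∂(nuMeas d) - M * log M := by
      have : ∀ x, (f x) ^ 2 * Real.log ((f x) ^ 2 / M)
          = f x ^ 2 * log (f x ^ 2) - f x ^ 2 * log M := by
        intro x
        by_cases h : f x = 0
        · simp [h]
        · rw [Real.log_div (by positivity) hM0]; ring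
      simp only [this]
      rw [integral_sub, integral_mul_const]
      · apply us_integrable d hd
        exact Real.continuous_mul_log.comp_continuousOn (hcf.pow 2)
      · apply us_integrable d hd
        exact (hcf.pow 2).mul_const _
    rw [e2]
    linarith
end
end

section
/- Ultraspherical Poincaré inequality (spectral gap): let n ≥ 1. For every continuously differentiable function g on [−1,1], ∫_{−1}^{1} |g'(x)|² ν(x) dν_n(x) ≥ n ∫_{−1}^{1} |g − ḡ|² dν_n, where ḡ = ∫_{−1}^{1} g dν_n. -/
open MeasureTheory Real

noncomputable section

lemma Zd_pos (n : ℕ) (hn : 1 ≤ n) : 0 < Zd n := by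
  have h : (0 : ℝ) < n := by exact_mod_cast hn
  unfold Zd
  have h1 := Real.Gamma_pos_of_pos (s := (n : ℝ) / 2) (by positivity)
  have h2 := Real.Gamma_pos_of_pos (s := ((n : ℝ) + 1) / 2) (by positivity)
  have := Real.pi_pos
  positivity

lemma real_beta (a : ℝ) (ha : 0 < a) :
    ∫ x in (0:ℝ)..1, x ^ (a - 1) * (1 - x) ^ (a - 1)
      = Real.Gamma a * Real.Gamma a / Real.Gamma (2 * a) := by
  have h := ProbabilityTheory.beta_eq_betaIntegralReal a a ha ha
  rw [ProbabilityTheory.beta, Complex.betaIntegral, ← two_mul] at h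
  rw [h]
  have : ∫ x in (0:ℝ)..1, (x : ℂ) ^ ((a : ℂ) - 1) * (1 - (x : ℂ)) ^ ((a : ℂ) - 1)
      = ∫ x in (0:ℝ)..1, ((x ^ (a - 1) * (1 - x) ^ (a - 1) : ℝ) : ℂ) := by
    apply intervalIntegral.integral_congr
    intro x hx
    rw [Set.uIcc_of_le zero_le_one] at hx
    simp only
    rw [Complex.ofReal_mul, Complex.ofReal_cpow hx.1, Complex.ofReal_cpow (by linarith [hx.2])]
    push_cast
    rfl
  rw [this, intervalIntegral.integral_ofReal, Complex.ofReal_re]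

lemma integral_weight (n : ℕ) (hn : 1 ≤ n) :
    ∫ x in (-1:ℝ)..1, (1 - x ^ 2) ^ ((n : ℝ) / 2 - 1) = Zd n := by
  have hn0 : (0 : ℝ) < n := by exact_mod_cast hn
  have h1 := intervalIntegral.integral_comp_mul_sub (a := 0) (b := 1)
    (fun x : ℝ => (1 - x ^ 2) ^ ((n : ℝ) / 2 - 1)) (two_ne_zero' ℝ) 1
  norm_num at h1
  have h2 : ∫ x in (0:ℝ)..1, (1 - (2 * x - 1) ^ 2) ^ ((n : ℝ) / 2 - 1)
      = ∫ x in (0:ℝ)..1, (4:ℝ) ^ ((n : ℝ) / 2 - 1) *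
        (x ^ ((n : ℝ) / 2 - 1) * (1 - x) ^ ((n : ℝ) / 2 - 1)) := by
    apply intervalIntegral.integral_congr
    intro x hx
    rw [Set.uIcc_of_le zero_le_one] at hx
    simp only
    rw [← Real.mul_rpow hx.1 (by linarith [hx.2]), ← Real.mul_rpow (by norm_num)
      (mul_nonneg hx.1 (by linarith [hx.2]))]
    congr 1
    ring
  rw [h2, intervalIntegral.integral_const_mul, real_beta _ (by positivity)] at h1
  have h3 := Real.Gamma_mul_Gamma_add_half ((n : ℝ) / 2)
  have h4 : (2:ℝ) * ((n : ℝ) / 2) = n := by ring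
  have h5 : (n : ℝ) / 2 + 1 / 2 = ((n : ℝ) + 1) / 2 := by ring
  rw [h4] at h1 h3
  rw [h5] at h3
  have g1 := Real.Gamma_pos_of_pos (s := (n : ℝ) / 2) (by positivity)
  have g2 := Real.Gamma_pos_of_pos (s := ((n : ℝ) + 1) / 2) (by positivity)
  have g3 := Real.Gamma_pos_of_pos hn0
  have h6 : (4:ℝ) ^ ((n : ℝ) / 2 - 1) * 2 * 2 ^ (1 - (n:ℝ)) = 1 := by
    have : (4:ℝ) = 2 ^ (2:ℝ) := by norm_num
    rw [this, ← Real.rpow_mul (by norm_num)]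
    have e : (2:ℝ) ^ (2 * ((n : ℝ) / 2 - 1)) * 2 = 2 ^ (2 * ((n : ℝ) / 2 - 1) + 1) :=
      (Real.rpow_add_one (by norm_num) _).symm
    rw [e, ← Real.rpow_add (by norm_num)]
    rw [show 2 * ((n : ℝ) / 2 - 1) + 1 + (1 - (n : ℝ)) = 0 by ring, Real.rpow_zero]
  have h7 : ∫ x in (-1:ℝ)..1, (1 - x ^ 2) ^ ((n : ℝ) / 2 - 1) =
      2 * ((4:ℝ) ^ ((n : ℝ) / 2 - 1) *
        (Real.Gamma ((n : ℝ) / 2) * Real.Gamma ((n : ℝ) / 2) / Real.Gamma n)) := by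
    rw [h1]; ring
  rw [h7, Zd]
  field_simp
  calc _ = 4 ^ (((n:ℝ) - 2) / 2) * 2 * (Real.Gamma ((n : ℝ) / 2) * Real.Gamma (((n : ℝ) + 1) / 2)) := by
        ring
    _ = (4 ^ (((n:ℝ) - 2) / 2) * 2 * 2 ^ (1 - (n:ℝ))) * (√π * Real.Gamma n) := by rw [h3]; ring
    _ = _ := by
      rw [show ((n:ℝ) - 2) / 2 = (n : ℝ) / 2 - 1 by ring, h6, one_mul, mul_comm]

lemma weight_integrable (n : ℕ) (hn : 1 ≤ n) :
    IntervalIntegrable (fun x : ℝ => (1 - x ^ 2) ^ ((n : ℝ) / 2 - 1)) volume (-1) 1 := by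
  by_contra h
  have h1 := integral_weight n hn
  rw [intervalIntegral.integral_undef h] at h1
  linarith [Zd_pos n hn]

lemma integral_nu (n : ℕ) (hn : 1 ≤ n) (f : ℝ → ℝ) :
    ∫ x, f x ∂(nuMeas n) =
      ∫ x in (-1:ℝ)..1, (1 - x ^ 2) ^ ((n : ℝ) / 2 - 1) / Zd n * f x := by
  unfold nuMeas
  rw [integral_withDensity_eq_integral_toReal_smul (by fun_prop) (by simp),
    intervalIntegral.integral_of_le (by norm_num), integral_Ioc_eq_integral_Ioo]
  apply setIntegral_congr_fun measurableSet_Ioo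
  intro x hx
  have : 0 ≤ 1 - x ^ 2 := by nlinarith [hx.1, hx.2]
  simp only [smul_eq_mul]
  rw [ENNReal.toReal_ofReal (div_nonneg (Real.rpow_nonneg this _) (Zd_pos n hn).le)]

lemma nu_prob (n : ℕ) (hn : 1 ≤ n) : IsProbabilityMeasure (nuMeas n) := by
  have h := integral_nu n hn (fun _ => 1)
  simp only [mul_one] at h
  rw [intervalIntegral.integral_div, integral_weight n hn, div_self (Zd_pos n hn).ne'] at h
  simp only [integral_const, smul_eq_mul, mul_one] at h
  constructor
  exact (ENNReal.toReal_eq_one_iff _).1 h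

lemma nu_ae (n : ℕ) : ∀ᵐ x ∂(nuMeas n), x ∈ Set.Ioo (-1:ℝ) 1 := by
  unfold nuMeas
  exact (withDensity_absolutelyContinuous _ _).ae_le (ae_restrict_mem measurableSet_Ioo)

lemma nu_integrable (n : ℕ) (hn : 1 ≤ n) (f : ℝ → ℝ) (hf : Continuous f) :
    Integrable f (nuMeas n) := by
  have := nu_prob n hn
  obtain ⟨C, hC⟩ := isCompact_Icc.exists_bound_of_continuousOn
    (hf.continuousOn (s := Set.Icc (-1:ℝ) 1))
  refine Integrable.of_bound hf.aestronglyMeasurable C ?_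
  filter_upwards [nu_ae n] with x hx
  exact hC x (Set.Ioo_subset_Icc_self hx)

/-- Integration by parts. -/
lemma by_parts (n : ℕ) (hn : 1 ≤ n) (H k : ℝ → ℝ) (hk : Continuous k)
    (hH : ∀ x, HasDerivAt H (k x) x) :
    n * ∫ x, x * H x ∂(nuMeas n) = ∫ x, k x * (1 - x ^ 2) ∂(nuMeas n) := by
  have hn0 : (0 : ℝ) < n := by exact_mod_cast hn
  have hHc : Continuous H := continuous_iff_continuousAt.2 fun x => (hH x).continuousAt
  have hc : Continuous (fun x => k x * (1 - x ^ 2)) := by fun_prop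
  have hc2 : Continuous (fun x => n * (x * H x)) := by fun_prop
  rw [← integral_const_mul, ← sub_eq_zero, ← integral_sub (nu_integrable n hn _ hc2)
    (nu_integrable n hn _ hc), integral_nu n hn]
  rw [intervalIntegral.integral_eq_sub_of_hasDerivAt_of_le (by norm_num)
    (f := fun x => - ((1 - x ^ 2) ^ ((n : ℝ) / 2) / Zd n * H x))]
  · have : (n : ℝ) / 2 ≠ 0 := by positivity
    simp [this]
  · apply Continuous.continuousOn
    have : Continuous (fun x : ℝ => (1 - x ^ 2) ^ ((n : ℝ) / 2)) :=
      Continuous.rpow_const (by fun_prop) (fun x => Or.inr (by positivity))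
    fun_prop
  · intro x hx
    have hpos : 0 < 1 - x ^ 2 := by nlinarith [hx.1, hx.2]
    have h1 : HasDerivAt (fun x : ℝ => 1 - x ^ 2) (-(2 * x)) x := by
      simpa using (hasDerivAt_pow 2 x).const_sub 1
    have h2 := h1.rpow_const (p := (n : ℝ) / 2) (Or.inl hpos.ne')
    have h3 := ((h2.div_const (Zd n)).mul (hH x)).neg
    refine h3.congr_deriv ?_
    have h4 : (1 - x ^ 2) ^ ((n : ℝ) / 2) = (1 - x ^ 2) ^ ((n : ℝ) / 2 - 1) * (1 - x ^ 2) := by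
      rw [← Real.rpow_add_one hpos.ne']; congr 1; ring
    rw [h4]
    ring
  · exact ((weight_integrable n hn).div_const _).mul_continuousOn (by fun_prop)

lemma poincare_smooth (n : ℕ) (hn : 1 ≤ n) (G h : ℝ → ℝ) (hh : Continuous h)
    (hG : ∀ x, HasDerivAt G (h x) x) :
    (n : ℝ) * ∫ x, (G x - ∫ y, G y ∂(nuMeas n)) ^ 2 ∂(nuMeas n) ≤
      ∫ x, (h x) ^ 2 * (1 - x ^ 2) ∂(nuMeas n) := by
  have := nu_prob n hn
  have hn0 : (0 : ℝ) < n := by exact_mod_cast hn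
  set μ := nuMeas n with hμ
  have hGc : Continuous G := continuous_iff_continuousAt.2 fun x => (hG x).continuousAt
  obtain ⟨H, hH⟩ : ∃ H : ℝ → ℝ, ∀ x, HasDerivAt H (h x ^ 2) x :=
    ⟨fun x => ∫ t in (0:ℝ)..x, h t ^ 2, fun x =>
      (show Continuous (fun t => h t ^ 2) by fun_prop).integral_hasStrictDerivAt 0 x
        |>.hasDerivAt⟩
  have hHc : Continuous H := continuous_iff_continuousAt.2 fun x => (hH x).continuousAt
  have hint : ∀ f : ℝ → ℝ, Continuous f → Integrable f μ := nu_integrable n hn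
  -- pointwise
  have key : ∀ x y, y < x → (G x - G y) ^ 2 ≤ (x - y) * (H x - H y) := by
    intro x y hxy
    set c := (G x - G y) / (x - y) with hc
    have hd : 0 < x - y := by linarith
    have hcd : c * (x - y) = G x - G y := by rw [hc]; field_simp
    have hder : ∀ t, HasDerivAt (fun t => H t - 2 * c * G t + c ^ 2 * t) ((h t - c) ^ 2) t := by
      intro t
      refine (((hH t).sub ((hG t).const_mul (2 * c))).add
        ((hasDerivAt_id t).const_mul (c ^ 2))).congr_deriv ?_
      ring
    have hmono : Monotone (fun t => H t - 2 * c * G t + c ^ 2 * t) :=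
      monotone_of_hasDerivAt_nonneg hder (fun t => sq_nonneg _)
    have := hmono hxy.le
    simp only at this
    have h2 : 0 ≤ (H x - H y) - 2 * c * (G x - G y) + c ^ 2 * (x - y) := by linarith
    rw [← hcd] at h2 ⊢
    nlinarith [mul_nonneg hd.le h2]
  have key' : ∀ x y, (G x - G y) ^ 2 ≤ (x - y) * (H x - H y) := by
    intro x y
    rcases lt_trichotomy x y with hl | hl | hl
    · have := key y x hl
      nlinarith
    · subst hl; simp
    · exact key x y hl
  have hx0 : ∫ x, x ∂μ = 0 := by
    have := by_parts n hn (fun _ => 1) (fun _ => 0) continuous_const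
      (fun x => hasDerivAt_const x 1)
    simp only [mul_one, zero_mul, integral_zero] at this
    exact (mul_eq_zero.1 this).resolve_left hn0.ne'
  have hxH := by_parts n hn H (fun x => h x ^ 2) (by fun_prop) hH
  rw [← hμ] at hxH
  set m := ∫ y, G y ∂μ with hm
  set S := ∫ y, G y ^ 2 ∂μ with hS
  set mH := ∫ y, H y ∂μ with hmH
  set T := ∫ y, y * H y ∂μ with hT
  have iG := hint G hGc
  have iG2 := hint (fun y => G y ^ 2) (by fun_prop)
  have iH := hint H hHc
  have ix := hint (fun y => y) (by fun_prop)
  have ixH := hint (fun y => y * H y) (by fun_prop)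
  have lin4 : ∀ (f1 f2 f3 : ℝ → ℝ) (a b c d : ℝ), Integrable f1 μ → Integrable f2 μ →
      Integrable f3 μ → ∫ y, (a * f1 y + b * f2 y + c * f3 y + d) ∂μ =
        a * ∫ y, f1 y ∂μ + b * ∫ y, f2 y ∂μ + c * ∫ y, f3 y ∂μ + d := by
    intro f1 f2 f3 a b c d i1 i2 i3
    have j1 := i1.const_mul a
    have j2 := i2.const_mul b
    have j3 := i3.const_mul c
    have j12 : Integrable (fun y => a * f1 y + b * f2 y) μ := j1.add j2
    have j123 : Integrable (fun y => a * f1 y + b * f2 y + c * f3 y) μ := j12.add j3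
    rw [integral_add j123 (integrable_const d), integral_add j12 j3, integral_add j1 j2]
    simp [integral_const_mul]
  have inner : ∀ x, G x ^ 2 - 2 * m * G x + S ≤ x * H x - mH * x + T := by
    intro x
    have e1 : ∫ y, (G x - G y) ^ 2 ∂μ = G x ^ 2 - 2 * m * G x + S := by
      have := lin4 (fun y => G y ^ 2) G G 1 (-2 * G x) 0 (G x ^ 2) iG2 iG iG
      rw [← hS, ← hm] at this
      rw [show G x ^ 2 - 2 * m * G x + S = 1 * S + -2 * G x * m + 0 * m + G x ^ 2 by ring, ← this]
      congr 1; ext y; ring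
    have e2 : ∫ y, (x - y) * (H x - H y) ∂μ = x * H x - mH * x + T := by
      have := lin4 (fun y => y * H y) H (fun y => y) 1 (-x) (-H x) (x * H x) ixH iH ix
      rw [← hT, ← hmH, hx0] at this
      rw [show x * H x - mH * x + T = 1 * T + -x * mH + -H x * 0 + x * H x by ring, ← this]
      congr 1; ext y; ring
    rw [← e1, ← e2]
    exact integral_mono (hint _ (by fun_prop)) (hint _ (by fun_prop)) (fun y => key' x y)
  have outer := integral_mono (μ := μ) (hint (fun x => G x ^ 2 - 2 * m * G x + S) (by fun_prop))
    (hint (fun x => x * H x - mH * x + T) (by fun_prop)) inner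
  have o1 : ∫ x, (G x ^ 2 - 2 * m * G x + S) ∂μ = 2 * S - 2 * m ^ 2 := by
    have := lin4 (fun y => G y ^ 2) G G 1 (-2 * m) 0 S iG2 iG iG
    rw [← hS, ← hm] at this
    rw [show 2 * S - 2 * m ^ 2 = 1 * S + -2 * m * m + 0 * m + S by ring, ← this]
    congr 1; ext y; ring
  have o2 : ∫ x, (x * H x - mH * x + T) ∂μ = 2 * T := by
    have := lin4 (fun y => y * H y) H (fun y => y) 1 0 (-mH) T ixH iH ix
    rw [← hT, ← hmH, hx0] at this
    rw [show 2 * T = 1 * T + 0 * mH + -mH * 0 + T by ring, ← this]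
    congr 1; ext y; ring
  have o3 : ∫ x, (G x - m) ^ 2 ∂μ = S - m ^ 2 := by
    have := lin4 (fun y => G y ^ 2) G G 1 (-2 * m) 0 (m ^ 2) iG2 iG iG
    rw [← hS, ← hm] at this
    rw [show S - m ^ 2 = 1 * S + -2 * m * m + 0 * m + m ^ 2 by ring, ← this]
    congr 1; ext y; ring
  rw [o1, o2] at outer
  rw [o3, ← hxH]
  exact mul_le_mul_of_nonneg_left (by linarith) hn0.le

theorem ultraspherical_poincare (n : ℕ) (hn : 1 ≤ n)
    (g : ℝ → ℝ) (hg : ContDiffOn ℝ 1 g (Set.Icc (-1 : ℝ) 1)) :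
    ∫ x, (deriv g x) ^ 2 * (1 - x ^ 2) ∂(nuMeas n) ≥
      (n : ℝ) * ∫ x, (g x - ∫ y, g y ∂(nuMeas n)) ^ 2 ∂(nuMeas n) := by
  have h11 : (-1:ℝ) ≤ 1 := by norm_num
  have hd : ContinuousOn (derivWithin g (Set.Icc (-1:ℝ) 1)) (Set.Icc (-1) 1) :=
    hg.continuousOn_derivWithin (uniqueDiffOn_Icc (by norm_num)) le_rfl
  set h : ℝ → ℝ := Set.IccExtend h11 ((Set.Icc (-1:ℝ) 1).domRestrict
    (derivWithin g (Set.Icc (-1:ℝ) 1))) with hh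
  have hc : Continuous h := hd.domRestrict.Icc_extend'
  have hgd : ∀ x ∈ Set.Ioo (-1:ℝ) 1, HasDerivAt g (h x) x := by
    intro x hx
    have hx' := Set.Ioo_subset_Icc_self hx
    have hn : Set.Icc (-1:ℝ) 1 ∈ nhds x := Icc_mem_nhds hx.1 hx.2
    have h1 : DifferentiableAt ℝ g x :=
      ((hg.differentiableOn one_ne_zero) x hx').differentiableAt hn
    have h2 : h x = deriv g x := by
      rw [hh, Set.IccExtend_of_mem _ _ hx', Set.domRestrict_apply]
      exact derivWithin_of_mem_nhds hn
    rw [h2]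
    exact h1.hasDerivAt
  set G : ℝ → ℝ := fun x => g (-1) + ∫ t in (-1:ℝ)..x, h t with hGdef
  have hG : ∀ x, HasDerivAt G (h x) x := fun x =>
    ((hc.integral_hasStrictDerivAt (-1) x).hasDerivAt).const_add _
  have heq : ∀ x ∈ Set.Ioo (-1:ℝ) 1, g x = G x := by
    intro x hx
    have := intervalIntegral.integral_eq_sub_of_hasDerivAt_of_le hx.1.le
      (hg.continuousOn.mono (Set.Icc_subset_Icc_right hx.2.le))
      (fun t ht => hgd t ⟨ht.1, ht.2.trans hx.2⟩) (hc.intervalIntegrable _ _)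
    simp only [hGdef]
    rw [this]; ring
  have main := poincare_smooth n hn G h hc hG
  have e1 : ∫ x, (deriv g x) ^ 2 * (1 - x ^ 2) ∂(nuMeas n) =
      ∫ x, (h x) ^ 2 * (1 - x ^ 2) ∂(nuMeas n) := by
    apply integral_congr_ae
    filter_upwards [nu_ae n] with x hx
    rw [(hgd x hx).deriv]
  have e2 : ∫ y, g y ∂(nuMeas n) = ∫ y, G y ∂(nuMeas n) := by
    apply integral_congr_ae
    filter_upwards [nu_ae n] with x hx
    exact heq x hx
  have e3 : ∫ x, (g x - ∫ y, g y ∂(nuMeas n)) ^ 2 ∂(nuMeas n) =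
      ∫ x, (G x - ∫ y, G y ∂(nuMeas n)) ^ 2 ∂(nuMeas n) := by
    rw [e2]
    apply integral_congr_ae
    filter_upwards [nu_ae n] with x hx
    rw [heq x hx]
  rw [e1, e3]
  exact main
end
end

section
/- Improved ultraspherical interpolation inequality for symmetric functions: let d ≥ 2, let p satisfy 2 < p < (2d² + 1)/(d−1)², and set α := 1 − (p−1)(d−1)²/(d(d+2)). Then for every continuously differentiable function f on [−1,1] satisfying f(−x) = f(x) for all x ∈ [−1,1], one has ∫_{−1}^{1} |f'(x)|² ν(x) dν_d(x) ≥ ( d + α(d+2) ) ( ‖f‖_p² − ‖f‖_2² ) / (p − 2), where ‖f‖_q = ( ∫_{−1}^{1} |f|^q dν_d )^{1/q}. -/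
open MeasureTheory Real

noncomputable section

/-! ### The weight -/

/-- The unnormalized weight. -/
def wt (D x : ℝ) : ℝ := (1 - x ^ 2) ^ (D / 2 - 1)

lemma wt_cont {D : ℝ} (hD : 2 ≤ D) : Continuous (wt D) := by
  unfold wt
  exact Continuous.rpow_const (by fun_prop) (fun x => Or.inr (by linarith))

lemma wt_nonneg (D : ℝ) {x : ℝ} (hx : x ∈ Set.Icc (0:ℝ) 1) : 0 ≤ wt D x := by
  unfold wt
  apply Real.rpow_nonneg
  nlinarith [hx.1, hx.2]

lemma wt_le_one {D : ℝ} (hD : 2 ≤ D) {x : ℝ} (hx : x ∈ Set.Icc (0:ℝ) 1) : wt D x ≤ 1 := by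
  unfold wt
  apply Real.rpow_le_one
  · nlinarith [hx.1, hx.2]
  · nlinarith [hx.1, hx.2]
  · linarith

/-- Derivative of `ν * ω`. -/
lemma wt_deriv (D : ℝ) {x : ℝ} (hx : x ∈ Set.Ioo (0:ℝ) 1) :
    HasDerivAt (fun x => (1 - x ^ 2) * wt D x) (- D * x * wt D x) x := by
  have hpos : 0 < 1 - x ^ 2 := by nlinarith [hx.1, hx.2]
  have h1 : HasDerivAt (fun x : ℝ => 1 - x ^ 2) (- (2 * x)) x := by
    have := ((hasDerivAt_pow 2 x).const_sub 1)
    simpa using this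
  have h2 := h1.rpow_const (p := D / 2 - 1) (Or.inl hpos.ne')
  have h3 := h1.mul h2
  have e : (1 - x ^ 2) ^ (D / 2 - 1) = (1 - x ^ 2) ^ (D / 2 - 1 - 1) * (1 - x ^ 2) := by
    rw [Real.rpow_sub_one hpos.ne' (D / 2 - 1), div_mul_cancel₀ _ hpos.ne']
  refine h3.congr_deriv ?_
  unfold wt
  rw [e]; ring

/-- The main dissipation inequality, at a fixed time. -/
lemma dissip (D p al ka : ℝ) (hD : 2 ≤ D) (hp : 2 < p)
    (hal : al = 1 - (p - 1) * (D - 1) ^ 2 / (D * (D + 2))) (hal0 : 0 ≤ al)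
    (hka : ka * (p - 2) = D + al * (D + 2))
    (u v v1 V V1 : ℝ → ℝ)
    (hu0 : ∀ x ∈ Set.Icc (0:ℝ) 1, 0 < u x)
    (hu : ∀ x ∈ Set.Ioo (0:ℝ) 1, HasDerivAt u (x * v x) x)
    (hv : ∀ x ∈ Set.Ioo (0:ℝ) 1, HasDerivAt v (v1 x) x)
    (hVe : ∀ x ∈ Set.Icc (0:ℝ) 1, V x = (1 - x ^ 2) * (v x + x * v1 x) - D * x ^ 2 * v x
      + (p - 1) * (1 - x ^ 2) * x ^ 2 * v x ^ 2 / u x)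
    (hV : ∀ x ∈ Set.Ioo (0:ℝ) 1, HasDerivAt V (V1 x) x)
    (cu : ContinuousOn u (Set.Icc 0 1)) (cv : ContinuousOn v (Set.Icc 0 1))
    (cV : ContinuousOn V (Set.Icc 0 1)) (cV1 : ContinuousOn V1 (Set.Icc 0 1)) :
    ∫ x in (0:ℝ)..1, ((x * v x) * V1 x * (1 - x ^ 2) + ka * u x * V x) * wt D x ≤ 0 := by
  have cw : ContinuousOn (wt D) (Set.Icc 0 1) := (wt_cont hD).continuousOn
  have hune : ∀ x ∈ Set.Icc (0:ℝ) 1, u x ≠ 0 := fun x hx => (hu0 x hx).ne'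
  set H : ℝ → ℝ := fun x => -(x * v x * V x) - ka * (u x * (x * v x)) - D * x * (x * v x) ^ 2
    + (p - 1) * (D / (D + 2)) * ((1 - x ^ 2) * (x * v x) ^ 3 / u x)
    + al * ((1 - x ^ 2) * (x * v x ^ 2)) with hH
  set φ : ℝ → ℝ := fun x => -(((x * v x) * V1 x * (1 - x ^ 2) + ka * u x * V x) * wt D x) with hφ
  have key : (fun x => ((1 - x ^ 2) * wt D x) * H x) 1 - (fun x => ((1 - x ^ 2) * wt D x) * H x) 0
      ≤ ∫ x in (0:ℝ)..1, φ x := by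
    let H1 : ℝ → ℝ := fun x =>
      -((v x + x * v1 x) * V x + x * v x * V1 x)
      - ka * (x * v x * (x * v x) + u x * (v x + x * v1 x))
      - (D * (x * v x) ^ 2 + D * x * (2 * (x * v x) * (v x + x * v1 x)))
      + (p - 1) * (D / (D + 2)) * (((-(2 * x) * (x * v x) ^ 3
          + (1 - x ^ 2) * (3 * (x * v x) ^ 2 * (v x + x * v1 x))) * u x
          - (1 - x ^ 2) * (x * v x) ^ 3 * (x * v x)) / u x ^ 2)
      + al * (-(2 * x) * (x * v x ^ 2) + (1 - x ^ 2) * (v x ^ 2 + x * (2 * v x * v1 x)))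
    refine intervalIntegral.sub_le_integral_of_hasDeriv_right_of_le
      (g := fun x => ((1 - x ^ 2) * wt D x) * H x) (g' := fun x => (- D * x * wt D x) * H x + ((1 - x ^ 2) * wt D x) * H1 x) zero_le_one ?_ ?_ ?_ ?_
    · have : ContinuousOn H (Set.Icc 0 1) := by
        simp only [hH]
        fun_prop (disch := assumption)
      fun_prop
    · intro x hx
      have hx' : x ∈ Set.Icc (0:ℝ) 1 := ⟨hx.1.le, hx.2.le⟩
      have hid := hasDerivAt_id' x
      have h1 : HasDerivAt (fun x : ℝ => 1 - x ^ 2) (- (2 * x)) x := by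
        have := ((hasDerivAt_pow 2 x).const_sub 1)
        simpa using this
      have hxv : HasDerivAt (fun x => x * v x) (v x + x * v1 x) x := by
        have := hid.mul (hv x hx)
        refine this.congr_deriv ?_
        simp
      have hxv2 : HasDerivAt (fun x => x * v x ^ 2) (v x ^ 2 + x * (2 * v x * v1 x)) x := by
        have := hid.mul ((hv x hx).pow 2)
        refine this.congr_deriv ?_
        simp
      have hH1 : HasDerivAt H (H1 x) x := by
        have := ((((hxv.mul (hV x hx)).neg.sub (((hu x hx).mul hxv).const_mul ka)).sub
          ((hid.const_mul D).mul (hxv.pow 2))).add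
          (((h1.mul (hxv.pow 3)).div (hu x hx) (hune x hx')).const_mul ((p - 1) * (D / (D + 2))))).add
          ((h1.mul hxv2).const_mul al)
        refine this.congr_deriv ?_
        simp only [H1]
        simp
      exact ((wt_deriv D hx).mul hH1).hasDerivWithinAt
    · apply ContinuousOn.integrableOn_Icc
      simp only [hφ]
      fun_prop
    · intro x hx
      have hx' : x ∈ Set.Icc (0:ℝ) 1 := ⟨hx.1.le, hx.2.le⟩
      have hune := hune x hx'
      have hD2 : D + 2 ≠ 0 := by linarith
      have hD0 : D ≠ 0 := by linarith
      have hw := wt_nonneg D hx'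
      suffices h : 0 ≤ φ x - ((- D * x * wt D x) * H x + ((1 - x ^ 2) * wt D x) * H1 x) by linarith
      set s := v x + x * v1 x with hs
      have hkey : φ x - ((- D * x * wt D x) * H x + ((1 - x ^ 2) * wt D x) * H1 x)
          = wt D x * (1 - x ^ 2) ^ 2 * ((1 - al) * (v x + x * v1 x) ^ 2
              - 2 * (p - 1) * (D - 1) / (D + 2) * ((x * v x) ^ 2 / u x) * (v x + x * v1 x)
              + (p - 1) * D / (D + 2) * ((x * v x) ^ 2 / u x) ^ 2
              + al * (x * v1 x) ^ 2)
            + wt D x * (1 - x ^ 2) * (x * v x) ^ 2 * (D + al * (D + 2) - ka * (p - 2)) := by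
        simp only [hφ, hH, H1, hVe x hx']
        field_simp
        ring
      rw [hkey, hka, sub_self, mul_zero, add_zero]
      apply mul_nonneg (mul_nonneg hw (sq_nonneg _))
      have : (1 - al) = (p - 1) * (D - 1) ^ 2 / (D * (D + 2)) := by rw [hal]; ring
      rw [this]
      have e : (p - 1) * (D - 1) ^ 2 / (D * (D + 2)) * (v x + x * v1 x) ^ 2
              - 2 * (p - 1) * (D - 1) / (D + 2) * ((x * v x) ^ 2 / u x) * (v x + x * v1 x)
              + (p - 1) * D / (D + 2) * ((x * v x) ^ 2 / u x) ^ 2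
          = (p - 1) / (D * (D + 2)) * ((D - 1) * (v x + x * v1 x) - D * ((x * v x) ^ 2 / u x)) ^ 2 := by
        field_simp
        ring
      rw [e]
      have : 0 ≤ (p - 1) / (D * (D + 2)) := by
        apply div_nonneg <;> nlinarith
      positivity
  have e : ∫ x in (0:ℝ)..1, φ x = -∫ x in (0:ℝ)..1, ((x * v x) * V1 x * (1 - x ^ 2) + ka * u x * V x) * wt D x := by
    simp only [hφ, intervalIntegral.integral_neg]
  rw [e] at key
  simp [hH] at key
  linarith


/-! ### The operator on polynomials in `y = x ^ 2` -/

open Polynomial in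
/-- The ultraspherical operator in the variable `y = x ^ 2`. -/
def Mop (D : ℝ) : ℝ[X] →ₗ[ℝ] ℝ[X] :=
  (LinearMap.mulLeft ℝ (4 * X * (1 - X) : ℝ[X])) ∘ₗ derivative ∘ₗ derivative
    + (LinearMap.mulLeft ℝ (2 - C (2 + 2 * D) * X : ℝ[X])) ∘ₗ derivative

lemma Mop_eval (D : ℝ) (P : Polynomial ℝ) (y : ℝ) :
    (Mop D P).eval y = 4 * y * (1 - y) * P.derivative.derivative.eval y
      + (2 - (2 + 2 * D) * y) * P.derivative.eval y := by
  simp [Mop]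
  ring

/-- The eigenvalues. -/
def mu (D : ℝ) (j : ℕ) : ℝ := 2 * j * (2 * j + D - 1)

lemma mu_pos {D : ℝ} (hD : 2 ≤ D) {j : ℕ} (hj : j ≠ 0) : 0 < mu D j := by
  have : (1:ℝ) ≤ j := by exact_mod_cast Nat.one_le_iff_ne_zero.mpr hj
  unfold mu
  have : 0 < 2 * (j:ℝ) + D - 1 := by linarith
  positivity

lemma mu_lt {D : ℝ} (hD : 2 ≤ D) {j k : ℕ} (hj : j < k) : mu D j < mu D k := by
  have h : (j:ℝ) < k := by exact_mod_cast hj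
  have h0 : (0:ℝ) ≤ j := by positivity
  unfold mu
  nlinarith

open Polynomial in
lemma Mop_X_pow (D : ℝ) (k : ℕ) :
    Mop D (X ^ (k + 1) : ℝ[X]) = - mu D (k + 1) • (X ^ (k + 1) : ℝ[X])
      + ((2 * (k + 1) * (2 * (k + 1) - 1) : ℝ)) • (X ^ k : ℝ[X]) := by
  apply Polynomial.funext
  intro y
  rw [Mop_eval]
  rcases k with _ | k
  · simp [mu]; ring
  · simp [mu]; ring

open Polynomial in
lemma decomp_X_pow {D : ℝ} (hD : 2 ≤ D) (k : ℕ) : ∃ Q : ℕ → ℝ[X],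
    (∀ j, Mop D (Q j) = - mu D j • Q j) ∧ (∃ c, Q 0 = C c) ∧ (∀ j, k < j → Q j = 0) ∧
    X ^ k = ∑ j ∈ Finset.range (k + 1), Q j := by
  induction k with
  | zero =>
    refine ⟨fun j => if j = 0 then 1 else 0, ?_, ⟨1, by simp⟩, ?_, by simp⟩
    · intro j
      by_cases hj : j = 0
      · subst hj
        simp [mu, Mop]
      · simp [hj]
    · intro j hj
      simp [hj.ne']
  | succ k ih =>
    obtain ⟨Q, h1, ⟨c, hc⟩, h3, h4⟩ := ih
    set b : ℝ := 2 * (k + 1) * (2 * (k + 1) - 1) with hb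
    let R : ℕ → ℝ[X] := fun j => (b / (mu D (k + 1) - mu D j)) • Q j
    let G : ℝ[X] := X ^ (k + 1) - ∑ j ∈ Finset.range (k + 1), R j
    have hR : ∀ j, Mop D (R j) = - mu D j • R j := by
      intro j
      simp only [R, map_smul, h1]
      rw [smul_comm]
    have hG : Mop D G = - mu D (k + 1) • G := by
      simp only [G, map_sub, Mop_X_pow, map_sum, hR, smul_sub, Finset.smul_sum]
      rw [h4, ← hb, Finset.smul_sum]
      have : ∑ j ∈ Finset.range (k + 1), b • Q j
          = ∑ j ∈ Finset.range (k + 1), (- mu D j • R j - (- mu D (k + 1)) • R j) := by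
        refine Finset.sum_congr rfl fun j hj => ?_
        have hj' : j < k + 1 := Finset.mem_range.1 hj
        have := mu_lt hD hj'
        have hne : mu D (k + 1) - mu D j ≠ 0 := by linarith
        simp only [R, ← sub_smul, smul_smul]
        congr 1
        field_simp
        ring
      rw [this, Finset.sum_sub_distrib]
      abel
    refine ⟨fun j => if j < k + 1 then R j else if j = k + 1 then G else 0, ?_, ?_, ?_, ?_⟩
    · intro j
      by_cases hj : j < k + 1
      · simp [hj, hR]
      · by_cases hj' : j = k + 1
        · subst hj'
          simp [hG]
        · simp [hj, hj']
    · refine ⟨(b / (mu D (k + 1) - mu D 0)) * c, ?_⟩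
      simp [R, hc, smul_eq_C_mul]
    · intro j hj
      simp [show ¬ j < k + 1 by omega, show ¬ j = k + 1 by omega]
    · rw [Finset.sum_range_succ]
      have : ∑ j ∈ Finset.range (k + 1), (if j < k + 1 then R j else if j = k + 1 then G else 0)
          = ∑ j ∈ Finset.range (k + 1), R j :=
        Finset.sum_congr rfl fun j hj => by simp [Finset.mem_range.1 hj]
      rw [this]
      simp [G]

open Polynomial in
lemma decomp {D : ℝ} (hD : 2 ≤ D) (P : ℝ[X]) : ∃ (N : ℕ) (Q : ℕ → ℝ[X]),
    (∀ j, Mop D (Q j) = - mu D j • Q j) ∧ (∃ c, Q 0 = C c) ∧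
    ∀ n, N ≤ n → P = ∑ j ∈ Finset.range n, Q j := by
  induction P using Polynomial.induction_on' with
  | add P P' h h' =>
    obtain ⟨N, Q, h1, ⟨c, h2⟩, h3⟩ := h
    obtain ⟨N', Q', h1', ⟨c', h2'⟩, h3'⟩ := h'
    refine ⟨max N N', fun j => Q j + Q' j, ?_, ⟨c + c', by simp [h2, h2']⟩, ?_⟩
    · intro j
      simp [h1, h1']
    · intro n hn
      rw [Finset.sum_add_distrib, ← h3 n (le_trans (le_max_left _ _) hn),
        ← h3' n (le_trans (le_max_right _ _) hn)]
  | monomial k a =>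
    obtain ⟨Q, h1, ⟨c, h2⟩, h3, h4⟩ := decomp_X_pow hD k
    refine ⟨k + 1, fun j => a • Q j, ?_, ⟨a * c, by simp [h2, smul_eq_C_mul]⟩, ?_⟩
    · intro j
      simp only [map_smul, h1]
      rw [smul_comm]
    · intro n hn
      rw [← Finset.smul_sum, ← smul_X_eq_monomial, h4]
      congr 1
      refine Finset.sum_subset (Finset.range_mono hn) ?_
      intro j _ hj
      exact h3 j (by simpa using hj)

/-- The heat flow on polynomials. -/
def Sfl (D : ℝ) (N : ℕ) (Q : ℕ → Polynomial ℝ) (t : ℝ) : Polynomial ℝ :=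
  ∑ j ∈ Finset.range N, Real.exp (-mu D j * t) • Q j

lemma Sfl_zero (D : ℝ) (N : ℕ) (Q : ℕ → Polynomial ℝ) :
    Sfl D N Q 0 = ∑ j ∈ Finset.range N, Q j := by
  simp [Sfl]

lemma Sfl_map_eval (D : ℝ) (N : ℕ) (Q : ℕ → Polynomial ℝ)
    (T : Polynomial ℝ →ₗ[ℝ] Polynomial ℝ) (t y : ℝ) :
    (T (Sfl D N Q t)).eval y = ∑ j ∈ Finset.range N, Real.exp (-mu D j * t) * (T (Q j)).eval y := by
  simp [Sfl, Polynomial.eval_finsetSum]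

lemma Sfl_cont (D : ℝ) (N : ℕ) (Q : ℕ → Polynomial ℝ)
    (T : Polynomial ℝ →ₗ[ℝ] Polynomial ℝ) :
    Continuous (fun z : ℝ × ℝ => (T (Sfl D N Q z.1)).eval z.2) := by
  simp only [Sfl_map_eval]
  refine continuous_finsetSum _ fun j _ => ?_
  have : Continuous (fun z : ℝ × ℝ => (T (Q j)).eval z.2) :=
    (T (Q j)).continuous.comp continuous_snd
  fun_prop

lemma Sfl_deriv (D : ℝ) (N : ℕ) (Q : ℕ → Polynomial ℝ)
    (hQ : ∀ j, Mop D (Q j) = - mu D j • Q j)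
    (T : Polynomial ℝ →ₗ[ℝ] Polynomial ℝ) (t y : ℝ) :
    HasDerivAt (fun t => (T (Sfl D N Q t)).eval y) ((T (Mop D (Sfl D N Q t))).eval y) t := by
  have e : (T (Mop D (Sfl D N Q t))).eval y
      = ∑ j ∈ Finset.range N, (Real.exp (-mu D j * t) * -mu D j) * (T (Q j)).eval y := by
    have := Sfl_map_eval D N Q (T ∘ₗ Mop D) t y
    simp only [LinearMap.comp_apply] at this
    rw [this]
    refine Finset.sum_congr rfl fun j _ => ?_
    rw [hQ, map_smul]
    simp
    ring
  rw [e]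
  simp only [Sfl_map_eval]
  refine HasDerivAt.fun_sum fun j _ => ?_
  have h1 : HasDerivAt (fun t : ℝ => -mu D j * t) (-mu D j) t := by
    simpa using (hasDerivAt_id' t).const_mul (-mu D j)
  exact h1.exp.mul_const _

lemma Sfl_bound {D : ℝ} (hD : 2 ≤ D) (N : ℕ) (Q : ℕ → Polynomial ℝ)
    (T : Polynomial ℝ →ₗ[ℝ] Polynomial ℝ) :
    ∃ K : ℝ, ∀ t, 0 ≤ t → ∀ y ∈ Set.Icc (0:ℝ) 1, |(T (Sfl D N Q t)).eval y| ≤ K := by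
  have hc : Continuous (fun y => ∑ j ∈ Finset.range N, |(T (Q j)).eval y|) := by
    refine continuous_finsetSum _ fun j _ => ?_
    exact (T (Q j)).continuous.abs
  obtain ⟨K, hK⟩ := (isCompact_Icc (a := (0:ℝ)) (b := 1)).bddAbove_image hc.continuousOn
  refine ⟨K, fun t ht y hy => ?_⟩
  refine le_trans ?_ (hK ⟨y, hy, rfl⟩)
  rw [Sfl_map_eval]
  refine (Finset.abs_sum_le_sum_abs _ _).trans ?_
  refine Finset.sum_le_sum fun j _ => ?_
  rw [abs_mul, abs_of_pos (Real.exp_pos _)]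
  have : Real.exp (-mu D j * t) ≤ 1 := by
    apply Real.exp_le_one_iff.2
    have : 0 ≤ mu D j := by
      rcases eq_or_ne j 0 with rfl | h
      · simp [mu]
      · exact (mu_pos hD h).le
    nlinarith
  nlinarith [abs_nonneg ((T (Q j)).eval y)]

lemma Sfl_lim {D : ℝ} (hD : 2 ≤ D) (N : ℕ) (hN : 0 < N) (Q : ℕ → Polynomial ℝ)
    (T : Polynomial ℝ →ₗ[ℝ] Polynomial ℝ) (y : ℝ) :
    Filter.Tendsto (fun t => (T (Sfl D N Q t)).eval y) Filter.atTop
      (nhds ((T (Q 0)).eval y)) := by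
  simp only [Sfl_map_eval]
  have : (T (Q 0)).eval y = ∑ j ∈ Finset.range N, (if j = 0 then (T (Q j)).eval y else 0) := by
    rw [Finset.sum_ite_eq' (Finset.range N) 0]
    simp [hN]
  rw [this]
  refine tendsto_finsetSum _ fun j _ => ?_
  by_cases hj : j = 0
  · subst hj
    simp [mu]
  · simp only [hj, if_false]
    have h1 : Filter.Tendsto (fun t => Real.exp (-mu D j * t)) Filter.atTop (nhds 0) := by
      apply Real.tendsto_exp_atBot.comp
      exact Filter.tendsto_id.const_mul_atTop_of_neg (by linarith [mu_pos hD hj])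
    simpa using h1.mul_const ((T (Q j)).eval y)

/-- At a minimum on `[0,1]` the operator is nonnegative. -/
lemma Mop_nonneg_of_min {D : ℝ} (hD : 2 ≤ D) (P : Polynomial ℝ) {y : ℝ}
    (hy : y ∈ Set.Icc (0:ℝ) 1) (hmin : ∀ z ∈ Set.Icc (0:ℝ) 1, P.eval y ≤ P.eval z) :
    0 ≤ (Mop D P).eval y := by
  rw [Mop_eval]
  have hder := P.hasDerivAt y
  have hmon : IsMinOn (fun x => P.eval x) (Set.Icc (0:ℝ) 1) y := fun z hz => hmin z hz
  rcases eq_or_lt_of_le hy.1 with h0 | h0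
  · -- left endpoint
    subst h0
    have : 0 ≤ P.derivative.eval 0 := by
      have h := hder.hasDerivWithinAt (s := Set.Icc (0:ℝ) 1)
      have h2 := (hmon.localize).hasFDerivWithinAt_nonneg h.hasFDerivWithinAt
        (y := 1) (by
          apply mem_posTangentConeAt_of_segment_subset
          simp [segment_eq_Icc])
      simpa using h2
    simpa using this
  rcases eq_or_lt_of_le hy.2 with h1 | h1
  · subst h1
    have : P.derivative.eval 1 ≤ 0 := by
      have h := hder.hasDerivWithinAt (s := Set.Icc (0:ℝ) 1)
      have h2 := (hmon.localize).hasFDerivWithinAt_nonneg h.hasFDerivWithinAt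
        (y := -1) (by
          apply mem_posTangentConeAt_of_segment_subset
          rw [segment_symm]
          simp [segment_eq_Icc])
      simpa using h2
    simp
    nlinarith
  · have hloc : IsLocalMin (fun x => P.eval x) y :=
      hmon.isLocalMin (Icc_mem_nhds h0 h1)
    have hd0 : P.derivative.eval y = 0 := hloc.hasDerivAt_eq_zero hder
    have hdd : 0 ≤ P.derivative.derivative.eval y := by
      by_contra hneg
      push Not at hneg
      have e1 : deriv (fun x => P.eval x) = fun x => P.derivative.eval x := by
        funext x; exact (P.hasDerivAt x).deriv
      have e2 : deriv (deriv (fun x => P.eval x)) y = P.derivative.derivative.eval y := by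
        rw [e1]; exact (P.derivative.hasDerivAt y).deriv
      have hmax : IsLocalMax (fun x => P.eval x) y :=
        isLocalMax_of_deriv_deriv_neg (by rw [e2]; exact hneg) (by rw [e1]; exact hd0)
          P.continuous.continuousAt
      have hconst : (fun x => P.eval x) =ᶠ[nhds y] fun _ => P.eval y := by
        filter_upwards [hloc, hmax] with x hx hx'
        exact le_antisymm hx' hx
      have := hconst.deriv.deriv_eq
      rw [e2] at this
      simp at this
      linarith
    rw [hd0]
    have : 0 ≤ 4 * y * (1 - y) := by nlinarith
    nlinarith [mul_nonneg this hdd]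

/-- The maximum principle for the heat flow. -/
lemma Sfl_min {D : ℝ} (hD : 2 ≤ D) (N : ℕ) (Q : ℕ → Polynomial ℝ)
    (hQ : ∀ j, Mop D (Q j) = - mu D j • Q j) (m : ℝ)
    (hm : ∀ y ∈ Set.Icc (0:ℝ) 1, m ≤ (Sfl D N Q 0).eval y) (t : ℝ) (ht : 0 ≤ t) :
    ∀ y ∈ Set.Icc (0:ℝ) 1, m ≤ (Sfl D N Q t).eval y := by
  have hcont := Sfl_cont D N Q LinearMap.id
  simp only [LinearMap.id_apply] at hcont
  have key : ∀ e > 0, ∀ y ∈ Set.Icc (0:ℝ) 1, m ≤ (Sfl D N Q t).eval y + e * t := by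
    intro e he y hy
    have hcomp : IsCompact (Set.Icc (0:ℝ) t ×ˢ Set.Icc (0:ℝ) 1) := isCompact_Icc.prod isCompact_Icc
    obtain ⟨⟨t0, y0⟩, hz, hmin⟩ := hcomp.exists_isMinOn ⟨(t, y), ⟨⟨ht, le_rfl⟩, hy⟩⟩
      (f := fun z : ℝ × ℝ => (Sfl D N Q z.1).eval z.2 + e * z.1)
      (hcont.add (by fun_prop)).continuousOn
    have hz1 : t0 ∈ Set.Icc 0 t := hz.1
    have hz2 : y0 ∈ Set.Icc (0:ℝ) 1 := hz.2
    have hmin' : ∀ s ∈ Set.Icc 0 t, ∀ x ∈ Set.Icc (0:ℝ) 1,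
        (Sfl D N Q t0).eval y0 + e * t0 ≤ (Sfl D N Q s).eval x + e * s :=
      fun s hs x hx => hmin (show (s, x) ∈ _ from ⟨hs, hx⟩)
    have ht0 : t0 = 0 := by
      by_contra hne
      have hpos : 0 < t0 := lt_of_le_of_ne hz1.1 (Ne.symm hne)
      have h1 : 0 ≤ (Mop D (Sfl D N Q t0)).eval y0 := by
        refine Mop_nonneg_of_min hD _ hz2 fun x hx => ?_
        have := hmin' t0 hz1 x hx
        linarith
      have h2 := Sfl_deriv D N Q hQ LinearMap.id t0 y0
      simp only [LinearMap.id_apply] at h2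
      have h3 : HasDerivAt (fun s => (Sfl D N Q s).eval y0 + e * s)
          ((Mop D (Sfl D N Q t0)).eval y0 + e) t0 := by
        have := h2.add ((hasDerivAt_id' t0).const_mul e)
        refine this.congr_deriv ?_
        simp
      have hm2 : IsMinOn (fun s => (Sfl D N Q s).eval y0 + e * s) (Set.Icc 0 t0) t0 :=
        fun s hs => hmin' s ⟨hs.1, hs.2.trans hz1.2⟩ y0 hz2
      have h4 := (hm2.localize).hasFDerivWithinAt_nonneg
        (h3.hasDerivWithinAt (s := Set.Icc 0 t0)).hasFDerivWithinAt
        (y := -t0) (by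
          apply mem_posTangentConeAt_of_segment_subset
          rw [segment_symm]
          simp [segment_eq_Icc, hpos.le])
      simp at h4
      nlinarith
    have h5 := hmin' t ⟨ht, le_rfl⟩ y hy
    have h6 := hm y0 hz2
    rw [ht0] at h5
    linarith
  intro y hy
  refine le_of_forall_pos_le_add fun δ hδ => ?_
  have h := key (δ / (t + 1)) (by positivity) y hy
  have : δ / (t + 1) * t ≤ δ := by
    rw [div_mul_eq_mul_div, div_le_iff₀ (by positivity)]
    nlinarith
  linarith


/-! ### The functional -/

/-- The integrand of the functional in terms of `ρ = u ^ p` and its derivative. -/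
def Fun (D r ka a b x : ℝ) : ℝ :=
  ((r * a ^ (r - 1) * b) ^ 2 * (1 - x ^ 2) + ka * (a ^ r) ^ 2) * wt D x

lemma Fun_contOn {D r ka : ℝ} (hD : 2 ≤ D) {ρ σ : ℝ → ℝ} (h0 : ∀ x ∈ Set.Icc (0:ℝ) 1, 0 < ρ x)
    (h1 : ContinuousOn ρ (Set.Icc 0 1)) (h2 : ContinuousOn σ (Set.Icc 0 1)) :
    ContinuousOn (fun x => Fun D r ka (ρ x) (σ x) x) (Set.Icc 0 1) := by
  have cw : ContinuousOn (wt D) (Set.Icc 0 1) := (wt_cont hD).continuousOn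
  have c1 : ContinuousOn (fun x => ρ x ^ (r - 1)) (Set.Icc 0 1) :=
    h1.rpow_const fun x hx => Or.inl (h0 x hx).ne'
  have c2 : ContinuousOn (fun x => ρ x ^ r) (Set.Icc 0 1) :=
    h1.rpow_const fun x hx => Or.inl (h0 x hx).ne'
  unfold Fun
  fun_prop

lemma Fun_tendsto {ι : Type*} {l : Filter ι} [l.IsCountablyGenerated] {D r ka : ℝ} (hD : 2 ≤ D)
    (hr0 : 0 < r) (hr1 : r < 1) (hka : 0 ≤ ka)
    {ρ σ : ι → ℝ → ℝ} {ρ' σ' : ℝ → ℝ} {m K : ℝ} (hm : 0 < m)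
    (h0 : ∀ᶠ i in l, ∀ x ∈ Set.Icc (0:ℝ) 1, m ≤ ρ i x ∧ ρ i x ≤ K ∧ |σ i x| ≤ K)
    (hm' : ∀ x ∈ Set.Icc (0:ℝ) 1, 0 < ρ' x)
    (h1 : ∀ᶠ i in l, ContinuousOn (ρ i) (Set.Icc 0 1))
    (h2 : ∀ᶠ i in l, ContinuousOn (σ i) (Set.Icc 0 1))
    (h3 : ∀ x ∈ Set.Icc (0:ℝ) 1, Filter.Tendsto (fun i => ρ i x) l (nhds (ρ' x)))
    (h4 : ∀ x ∈ Set.Icc (0:ℝ) 1, Filter.Tendsto (fun i => σ i x) l (nhds (σ' x))) :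
    Filter.Tendsto (fun i => ∫ x in (0:ℝ)..1, Fun D r ka (ρ i x) (σ i x) x) l
      (nhds (∫ x in (0:ℝ)..1, Fun D r ka (ρ' x) (σ' x) x)) := by
  refine intervalIntegral.tendsto_integral_filter_of_dominated_convergence
    (fun _ => (r * m ^ (r - 1) * K) ^ 2 + ka * (K ^ r) ^ 2) ?_ ?_ (by simp) ?_
  · filter_upwards [h0, h1, h2] with i h0 h1 h2
    have := Fun_contOn (r := r) (ka := ka) hD (fun x hx => lt_of_lt_of_le hm (h0 x hx).1) h1 h2
    rw [Set.uIoc_of_le zero_le_one]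
    exact (this.mono Set.Ioc_subset_Icc_self).aestronglyMeasurable measurableSet_Ioc
  · filter_upwards [h0] with i h0
    refine Filter.Eventually.of_forall fun x hx => ?_
    rw [Set.uIoc_of_le zero_le_one] at hx
    have hx' : x ∈ Set.Icc (0:ℝ) 1 := ⟨hx.1.le, hx.2⟩
    obtain ⟨a1, a2, a3⟩ := h0 x hx'
    have hw := wt_nonneg D hx'
    have hw1 := wt_le_one hD hx'
    have hpos : 0 < ρ i x := lt_of_lt_of_le hm a1
    have b1 : ρ i x ^ (r - 1) ≤ m ^ (r - 1) :=
      Real.rpow_le_rpow_of_nonpos hm a1 (by linarith)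
    have b2 : ρ i x ^ r ≤ K ^ r := Real.rpow_le_rpow hpos.le a2 hr0.le
    have b3 : 0 < ρ i x ^ (r - 1) := Real.rpow_pos_of_pos hpos _
    have b4 : 0 < ρ i x ^ r := Real.rpow_pos_of_pos hpos _
    have hn : 0 ≤ 1 - x ^ 2 := by nlinarith [hx.1, hx.2]
    have hn1 : 1 - x ^ 2 ≤ 1 := by nlinarith
    have c1 : (r * ρ i x ^ (r - 1) * σ i x) ^ 2 ≤ (r * m ^ (r - 1) * K) ^ 2 := by
      rw [← sq_abs (r * ρ i x ^ (r - 1) * σ i x), abs_mul, abs_mul, abs_of_pos hr0, abs_of_pos b3]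
      gcongr
    have c2 : (ρ i x ^ r) ^ 2 ≤ (K ^ r) ^ 2 := by gcongr
    have c3 : (r * ρ i x ^ (r - 1) * σ i x) ^ 2 * (1 - x ^ 2) ≤ (r * m ^ (r - 1) * K) ^ 2 :=
      le_trans (mul_le_of_le_one_right (sq_nonneg _) hn1) c1
    unfold Fun
    rw [Real.norm_eq_abs, abs_of_nonneg (by positivity)]
    refine le_trans (mul_le_of_le_one_right (by positivity) hw1) ?_
    gcongr
  · refine Filter.Eventually.of_forall fun x hx => ?_
    rw [Set.uIoc_of_le zero_le_one] at hx
    have hx' : x ∈ Set.Icc (0:ℝ) 1 := ⟨hx.1.le, hx.2⟩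
    have hp := hm' x hx'
    have t1 := (h3 x hx').rpow_const (p := r - 1) (Or.inl hp.ne')
    have t2 := (h3 x hx').rpow_const (p := r) (Or.inl hp.ne')
    unfold Fun
    exact (((((t1.const_mul r).mul (h4 x hx')).pow 2).mul_const _).add
      ((t2.pow 2).const_mul ka)).mul_const _

lemma poly_x_deriv (P : Polynomial ℝ) (x : ℝ) :
    HasDerivAt (fun x => P.eval (x ^ 2)) (2 * x * P.derivative.eval (x ^ 2)) x := by
  have h := (P.hasDerivAt (x ^ 2)).comp x (hasDerivAt_pow 2 x)
  refine h.congr_deriv ?_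
  simp
  ring

lemma mass_zero {D : ℝ} (hD : 2 ≤ D) (P : Polynomial ℝ) :
    ∫ x in (0:ℝ)..1, (Mop D P).eval (x ^ 2) * wt D x = 0 := by
  have cw := wt_cont hD
  have hP := fun P : Polynomial ℝ => P.continuous
  have := intervalIntegral.integral_eq_sub_of_hasDerivAt_of_le (zero_le_one (α := ℝ))
    (f := fun x => ((1 - x ^ 2) * wt D x) * (2 * x * P.derivative.eval (x ^ 2)))
    (f' := fun x => (Mop D P).eval (x ^ 2) * wt D x) ?_ ?_ ?_
  · rw [this]; simp
  · have := (hP P.derivative).comp (continuous_pow 2)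
    simp only [Function.comp_def] at this
    fun_prop
  · intro x hx
    have h1 := (wt_deriv D hx).mul
      (((hasDerivAt_id' x).const_mul 2).mul (poly_x_deriv P.derivative x))
    refine h1.congr_deriv ?_
    rw [Mop_eval]
    simp only [Pi.mul_apply]
    ring
  · apply Continuous.intervalIntegrable
    have := (hP (Mop D P)).comp (continuous_pow 2)
    simp only [Function.comp_def] at this
    fun_prop

/-- Time derivative of the integrand. -/
def Fdot (D r ka a b a' b' x : ℝ) : ℝ :=
  2 * ((r * a ^ (r - 1) * b * (r * ((r - 1) * a ^ (r - 1 - 1) * a' * b + a ^ (r - 1) * b'))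
    * (1 - x ^ 2) + ka * a ^ r * (r * a ^ (r - 1) * a')) * wt D x)

lemma Fun_hasDerivAt (D r ka x : ℝ) {a b : ℝ → ℝ} {a' b' t : ℝ} (ha0 : 0 < a t)
    (ha : HasDerivAt a a' t) (hb : HasDerivAt b b' t) :
    HasDerivAt (fun t => Fun D r ka (a t) (b t) x) (Fdot D r ka (a t) (b t) a' b' x) t := by
  have t1 := ha.rpow_const (p := r - 1) (Or.inl ha0.ne')
  have t2 := ha.rpow_const (p := r) (Or.inl ha0.ne')
  have := (((((t1.const_mul r).mul hb).pow 2).mul_const (1 - x ^ 2)).add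
      ((t2.pow 2).const_mul ka)).mul_const (wt D x)
  refine this.congr_deriv ?_
  unfold Fdot
  simp only [Pi.mul_apply]
  push_cast
  ring

lemma Fdot_nonpos {D p al ka : ℝ} (hD : 2 ≤ D) (hp : 2 < p)
    (hal : al = 1 - (p - 1) * (D - 1) ^ 2 / (D * (D + 2))) (hal0 : 0 ≤ al)
    (hka : ka * (p - 2) = D + al * (D + 2)) (S : Polynomial ℝ)
    (hS : ∀ y ∈ Set.Icc (0:ℝ) 1, 0 < S.eval y) :
    ∫ x in (0:ℝ)..1, Fdot D (1 / p) ka (S.eval (x ^ 2)) (2 * x * S.derivative.eval (x ^ 2))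
      ((Mop D S).eval (x ^ 2)) (2 * x * (Mop D S).derivative.eval (x ^ 2)) x ≤ 0 := by
  have hx2 : ∀ x ∈ Set.Icc (0:ℝ) 1, x ^ 2 ∈ Set.Icc (0:ℝ) 1 := fun x hx =>
    ⟨sq_nonneg x, by nlinarith [hx.1, hx.2]⟩
  have hpos : ∀ x ∈ Set.Icc (0:ℝ) 1, 0 < S.eval (x ^ 2) := fun x hx => hS _ (hx2 x hx)
  set r : ℝ := 1 / p with hr
  have cP : ∀ P : Polynomial ℝ, ContinuousOn (fun x => P.eval (x ^ 2)) (Set.Icc (0:ℝ) 1) :=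
    fun P => (P.continuous.comp (continuous_pow 2)).continuousOn
  have cpow : ∀ s : ℝ, ContinuousOn (fun x => S.eval (x ^ 2) ^ s) (Set.Icc (0:ℝ) 1) :=
    fun s => (cP S).rpow_const fun x hx => Or.inl (hpos x hx).ne'
  have dpow : ∀ s : ℝ, ∀ x ∈ Set.Ioo (0:ℝ) 1, HasDerivAt (fun x => S.eval (x ^ 2) ^ s)
      (2 * x * S.derivative.eval (x ^ 2) * s * S.eval (x ^ 2) ^ (s - 1)) x := fun s x hx =>
    (poly_x_deriv S x).rpow_const (Or.inl (hpos x ⟨hx.1.le, hx.2.le⟩).ne')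
  have key := dissip D p al ka hD hp hal hal0 hka
    (fun x => S.eval (x ^ 2) ^ r)
    (fun x => r * S.eval (x ^ 2) ^ (r - 1) * (2 * S.derivative.eval (x ^ 2)))
    (fun x => r * ((r - 1) * S.eval (x ^ 2) ^ (r - 1 - 1) * (2 * x * S.derivative.eval (x ^ 2))
        * (2 * S.derivative.eval (x ^ 2))
      + S.eval (x ^ 2) ^ (r - 1) * (2 * (2 * x * S.derivative.derivative.eval (x ^ 2)))))
    (fun x => r * S.eval (x ^ 2) ^ (r - 1) * (Mop D S).eval (x ^ 2))
    (fun x => r * ((r - 1) * S.eval (x ^ 2) ^ (r - 1 - 1) * (Mop D S).eval (x ^ 2)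
        * (2 * x * S.derivative.eval (x ^ 2))
      + S.eval (x ^ 2) ^ (r - 1) * (2 * x * (Mop D S).derivative.eval (x ^ 2))))
    (fun x hx => Real.rpow_pos_of_pos (hpos x hx) _)
    ?_ ?_ ?_ ?_ ?_ ?_ ?_ ?_
  · have e : ∀ x, Fdot D r ka (S.eval (x ^ 2)) (2 * x * S.derivative.eval (x ^ 2))
      ((Mop D S).eval (x ^ 2)) (2 * x * (Mop D S).derivative.eval (x ^ 2)) x
      = 2 * (((x * (r * S.eval (x ^ 2) ^ (r - 1) * (2 * S.derivative.eval (x ^ 2)))) *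
        (r * ((r - 1) * S.eval (x ^ 2) ^ (r - 1 - 1) * (Mop D S).eval (x ^ 2)
        * (2 * x * S.derivative.eval (x ^ 2))
      + S.eval (x ^ 2) ^ (r - 1) * (2 * x * (Mop D S).derivative.eval (x ^ 2)))) * (1 - x ^ 2)
        + ka * S.eval (x ^ 2) ^ r * (r * S.eval (x ^ 2) ^ (r - 1) * (Mop D S).eval (x ^ 2)))
        * wt D x) := by
      intro x; unfold Fdot; ring
    simp only [e, intervalIntegral.integral_const_mul]
    linarith
  · intro x hx
    refine (dpow r x hx).congr_deriv ?_
    ring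
  · intro x hx
    refine (((dpow (r - 1) x hx).const_mul r).mul
      ((poly_x_deriv S.derivative x).const_mul 2)).congr_deriv ?_
    ring
  · intro x hx
    have hne := (hpos x hx).ne'
    have hrne : (S.eval (x ^ 2)) ^ r ≠ 0 := (Real.rpow_pos_of_pos (hpos x hx) _).ne'
    have hpne : p ≠ 0 := by linarith
    simp only [Mop_eval, Real.rpow_sub_one hne]
    rw [hr] at *
    field_simp
    ring
  · intro x hx
    refine (((dpow (r - 1) x hx).const_mul r).mul (poly_x_deriv (Mop D S) x)).congr_deriv ?_
    ring
  · exact cpow r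
  · have := cpow (r - 1); have := cP S.derivative
    fun_prop
  · have := cpow (r - 1); have := cP (Mop D S)
    fun_prop
  · have := cpow (r - 1); have := cpow (r - 1 - 1); have := cP (Mop D S)
    have := cP S.derivative; have := cP (Mop D S).derivative
    fun_prop


/-- The inequality for positive polynomials in `x ^ 2`. -/
lemma poly_ineq {D p al ka : ℝ} (hD : 2 ≤ D) (hp : 2 < p)
    (hal : al = 1 - (p - 1) * (D - 1) ^ 2 / (D * (D + 2))) (hal0 : 0 ≤ al)
    (hka : ka * (p - 2) = D + al * (D + 2)) (hka0 : 0 ≤ ka) (S : Polynomial ℝ)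
    (hS : ∀ y ∈ Set.Icc (0:ℝ) 1, 0 < S.eval y) :
    ∃ c : ℝ, 0 ≤ c ∧
      ∫ x in (0:ℝ)..1, S.eval (x ^ 2) * wt D x = c * ∫ x in (0:ℝ)..1, wt D x ∧
      ka * (c ^ (1 / p)) ^ 2 * ∫ x in (0:ℝ)..1, wt D x
        ≤ ∫ x in (0:ℝ)..1,
          Fun D (1 / p) ka (S.eval (x ^ 2)) (2 * x * S.derivative.eval (x ^ 2)) x := by
  obtain ⟨N0, Q, hQ, ⟨c, hc⟩, hN⟩ := decomp hD S
  set N := N0 + 1 with hNdef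
  have hSN : Sfl D N Q 0 = S := by rw [Sfl_zero]; exact (hN N (by omega)).symm
  have hr0 : 0 < 1 / p := by positivity
  have hr1 : 1 / p < 1 := by rw [div_lt_one (by linarith)]; linarith
  have hx2 : ∀ x ∈ Set.Icc (0:ℝ) 1, x ^ 2 ∈ Set.Icc (0:ℝ) 1 := fun x hx =>
    ⟨sq_nonneg x, by nlinarith [hx.1, hx.2]⟩
  -- lower bound
  obtain ⟨y0, hy0, hmin⟩ := (isCompact_Icc (a := (0:ℝ)) (b := 1)).exists_isMinOn
    (Set.nonempty_Icc.2 zero_le_one) S.continuous.continuousOn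
  set m := S.eval y0 with hm
  have hm0 : 0 < m := hS y0 hy0
  have hlow : ∀ t, 0 ≤ t → ∀ y ∈ Set.Icc (0:ℝ) 1, m ≤ (Sfl D N Q t).eval y := by
    intro t ht
    refine Sfl_min hD N Q hQ m ?_ t ht
    rw [hSN]
    intro y hy
    exact hmin hy
  have lim1 := fun y => Sfl_lim hD N (by omega) Q LinearMap.id y
  have lim2 := fun y => Sfl_lim hD N (by omega) Q Polynomial.derivative y
  simp only [LinearMap.id_apply] at lim1
  simp only [hc, Polynomial.eval_C, Polynomial.derivative_C, Polynomial.eval_zero] at lim1 lim2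
  have hcm : m ≤ c := by
    refine ge_of_tendsto (lim1 0) ?_
    filter_upwards [Filter.eventually_ge_atTop 0] with t ht
    exact hlow t ht 0 (by simp)
  have hc0 : 0 < c := lt_of_lt_of_le hm0 hcm
  obtain ⟨K1, hK1⟩ := Sfl_bound hD N Q LinearMap.id
  obtain ⟨K2, hK2⟩ := Sfl_bound hD N Q Polynomial.derivative
  simp only [LinearMap.id_apply] at hK1
  set K := max K1 (2 * K2) with hK
  have hbd : ∀ t, 0 ≤ t → ∀ x ∈ Set.Icc (0:ℝ) 1, m ≤ (Sfl D N Q t).eval (x ^ 2) ∧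
      (Sfl D N Q t).eval (x ^ 2) ≤ K ∧ |2 * x * (Sfl D N Q t).derivative.eval (x ^ 2)| ≤ K := by
    intro t ht x hx
    refine ⟨hlow t ht _ (hx2 x hx), ?_, ?_⟩
    · exact (le_abs_self _).trans ((hK1 t ht _ (hx2 x hx)).trans (le_max_left _ _))
    · refine le_trans ?_ (le_max_right _ _)
      have := hK2 t ht _ (hx2 x hx)
      rw [abs_mul, abs_of_nonneg (by linarith [hx.1] : 0 ≤ 2 * x)]
      nlinarith [abs_nonneg ((Sfl D N Q t).derivative.eval (x ^ 2)), hx.1, hx.2]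
  have cont1 : ∀ P : Polynomial ℝ, Continuous (fun x => P.eval (x ^ 2)) := fun P =>
    P.continuous.comp (continuous_pow 2)
  have cont2 : ∀ P : Polynomial ℝ, Continuous (fun x => 2 * x * P.eval (x ^ 2)) := fun P => by
    have := cont1 P
    fun_prop
  set J : ℝ → ℝ := fun t => ∫ x in (0:ℝ)..1, Fun D (1 / p) ka ((Sfl D N Q t).eval (x ^ 2))
    (2 * x * (Sfl D N Q t).derivative.eval (x ^ 2)) x with hJ
  have Jlim : Filter.Tendsto J Filter.atTop
      (nhds (∫ x in (0:ℝ)..1, Fun D (1 / p) ka c (2 * x * 0) x)) := by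
    refine Fun_tendsto hD hr0 hr1 hka0 (m := m) (K := K) hm0 ?_ (fun _ _ => hc0) ?_ ?_ ?_ ?_
    · filter_upwards [Filter.eventually_ge_atTop 0] with t ht
      exact hbd t ht
    · exact Filter.Eventually.of_forall fun t => (cont1 _).continuousOn
    · exact Filter.Eventually.of_forall fun t => (cont2 _).continuousOn
    · intro x _; exact lim1 _
    · intro x _; exact (lim2 _).const_mul _
  have Jcont : ContinuousOn J (Set.Ici 0) := by
    intro t0 ht0
    have ht0' : (0:ℝ) ≤ t0 := ht0
    have cS := Sfl_cont D N Q LinearMap.id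
    have cS' := Sfl_cont D N Q Polynomial.derivative
    simp only [LinearMap.id_apply] at cS
    refine Fun_tendsto hD hr0 hr1 hka0 (m := m) (K := K) hm0 ?_ ?_ ?_ ?_ ?_ ?_
    · filter_upwards [self_mem_nhdsWithin] with t ht
      exact hbd t ht
    · exact fun x hx => lt_of_lt_of_le hm0 (hbd t0 ht0' x hx).1
    · exact Filter.Eventually.of_forall fun t => (cont1 _).continuousOn
    · exact Filter.Eventually.of_forall fun t => (cont2 _).continuousOn
    · intro x _
      have : Continuous fun t => (Sfl D N Q t).eval (x ^ 2) :=
        cS.comp (g := fun z : ℝ × ℝ => (Sfl D N Q z.1).eval z.2)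
          (f := fun t => (t, x ^ 2)) (by fun_prop)
      exact this.continuousWithinAt
    · intro x _
      have : Continuous fun t => (Sfl D N Q t).derivative.eval (x ^ 2) :=
        cS'.comp (f := fun t => (t, x ^ 2)) (by fun_prop)
      exact (this.const_mul (2 * x)).continuousWithinAt
  have Jder : ∀ t, 0 < t → HasDerivAt J (∫ x in (0:ℝ)..1, Fdot D (1 / p) ka
      ((Sfl D N Q t).eval (x ^ 2)) (2 * x * (Sfl D N Q t).derivative.eval (x ^ 2))
      ((Mop D (Sfl D N Q t)).eval (x ^ 2))
      (2 * x * (Mop D (Sfl D N Q t)).derivative.eval (x ^ 2)) x) t := by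
    intro t0 ht0
    set F' : ℝ → ℝ → ℝ := fun t x => Fdot D (1 / p) ka
      ((Sfl D N Q t).eval (x ^ 2)) (2 * x * (Sfl D N Q t).derivative.eval (x ^ 2))
      ((Mop D (Sfl D N Q t)).eval (x ^ 2))
      (2 * x * (Mop D (Sfl D N Q t)).derivative.eval (x ^ 2)) x with hF'
    have hF'c : ContinuousOn (fun z : ℝ × ℝ => F' z.1 z.2)
        (Set.Icc (t0 / 2) (2 * t0) ×ˢ Set.Icc (0:ℝ) 1) := by
      have hsq : Continuous (fun z : ℝ × ℝ => (z.1, z.2 ^ 2)) := by fun_prop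
      have c1 := (Sfl_cont D N Q LinearMap.id).comp hsq
      have c2 := (Sfl_cont D N Q Polynomial.derivative).comp hsq
      have c3 := (Sfl_cont D N Q (Mop D)).comp hsq
      have c4 := (Sfl_cont D N Q (Polynomial.derivative ∘ₗ Mop D)).comp hsq
      simp only [LinearMap.id_apply, LinearMap.comp_apply, Function.comp_def] at c1 c2 c3 c4
      have cw : Continuous (fun z : ℝ × ℝ => wt D z.2) := (wt_cont hD).comp continuous_snd
      have cp : ∀ s : ℝ, ContinuousOn (fun z : ℝ × ℝ => (Sfl D N Q z.1).eval (z.2 ^ 2) ^ s)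
          (Set.Icc (t0 / 2) (2 * t0) ×ˢ Set.Icc (0:ℝ) 1) := fun s =>
        c1.continuousOn.rpow_const fun z hz => Or.inl
          (lt_of_lt_of_le hm0 (hlow z.1 (by linarith [hz.1.1]) _ (hx2 _ hz.2))).ne'
      have cp1 := cp (1 / p); have cp2 := cp (1 / p - 1); have cp3 := cp (1 / p - 1 - 1)
      have c2' := c2.continuousOn (s := Set.Icc (t0 / 2) (2 * t0) ×ˢ Set.Icc (0:ℝ) 1)
      have c3' := c3.continuousOn (s := Set.Icc (t0 / 2) (2 * t0) ×ˢ Set.Icc (0:ℝ) 1)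
      have c4' := c4.continuousOn (s := Set.Icc (t0 / 2) (2 * t0) ×ˢ Set.Icc (0:ℝ) 1)
      have cw' := cw.continuousOn (s := Set.Icc (t0 / 2) (2 * t0) ×ˢ Set.Icc (0:ℝ) 1)
      simp only [hF', Fdot]
      fun_prop
    obtain ⟨B, hB⟩ := (isCompact_Icc.prod isCompact_Icc).exists_bound_of_continuousOn hF'c
    have hs : Set.Ioo (t0 / 2) (2 * t0) ∈ nhds t0 := Ioo_mem_nhds (by linarith) (by linarith)
    have hFc : ∀ t, 0 ≤ t → ContinuousOn (fun x => Fun D (1 / p) ka ((Sfl D N Q t).eval (x ^ 2))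
        (2 * x * (Sfl D N Q t).derivative.eval (x ^ 2)) x) (Set.Icc 0 1) := fun t ht =>
      Fun_contOn hD (fun x hx => lt_of_lt_of_le hm0 (hbd t ht x hx).1)
        (cont1 _).continuousOn (cont2 _).continuousOn
    have hF't : ContinuousOn (F' t0) (Set.Icc 0 1) := by
      refine hF'c.comp (f := fun x => (t0, x)) (by fun_prop) ?_
      intro x hx
      exact ⟨⟨by linarith, by linarith⟩, hx⟩
    refine (intervalIntegral.hasDerivAt_integral_of_dominated_loc_of_deriv_le
      (F' := F') (bound := fun _ => B) hs ?_ ?_ ?_ ?_ (by simp) ?_).2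
    · filter_upwards [hs] with t ht
      rw [Set.uIoc_of_le zero_le_one]
      exact ((hFc t (by linarith [ht.1])).mono Set.Ioc_subset_Icc_self).aestronglyMeasurable
        measurableSet_Ioc
    · apply ContinuousOn.intervalIntegrable
      rw [Set.uIcc_of_le zero_le_one]
      exact hFc t0 ht0.le
    · rw [Set.uIoc_of_le zero_le_one]
      exact (hF't.mono Set.Ioc_subset_Icc_self).aestronglyMeasurable measurableSet_Ioc
    · refine Filter.Eventually.of_forall fun x hx t ht => ?_
      rw [Set.uIoc_of_le zero_le_one] at hx
      exact hB (t, x) ⟨⟨ht.1.le, ht.2.le⟩, ⟨hx.1.le, hx.2⟩⟩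
    · refine Filter.Eventually.of_forall fun x hx t ht => ?_
      rw [Set.uIoc_of_le zero_le_one] at hx
      have d1 := Sfl_deriv D N Q hQ LinearMap.id t (x ^ 2)
      have d2 := (Sfl_deriv D N Q hQ Polynomial.derivative t (x ^ 2)).const_mul (2 * x)
      simp only [LinearMap.id_apply] at d1
      exact Fun_hasDerivAt D (1 / p) ka x
        (lt_of_lt_of_le hm0 (hbd t (by linarith [ht.1]) x ⟨hx.1.le, hx.2⟩).1) d1 d2
  have Janti : AntitoneOn J (Set.Ici 0) := by
    refine antitoneOn_of_deriv_nonpos (convex_Ici 0) Jcont ?_ ?_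
    · intro t ht
      rw [interior_Ici] at ht
      exact (Jder t ht).differentiableAt.differentiableWithinAt
    · intro t ht
      rw [interior_Ici] at ht
      rw [(Jder t ht).deriv]
      exact Fdot_nonpos hD hp hal hal0 hka _
        fun y hy => lt_of_lt_of_le hm0 (hlow t (le_of_lt ht) y hy)
  have hfin : ∫ x in (0:ℝ)..1, Fun D (1 / p) ka c (2 * x * 0) x ≤ J 0 := by
    refine le_of_tendsto Jlim ?_
    filter_upwards [Filter.eventually_ge_atTop 0] with t ht
    exact Janti (Set.mem_Ici.2 le_rfl) (Set.mem_Ici.2 ht) ht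
  refine ⟨c, hc0.le, ?_, ?_⟩
  · have hj : ∀ j, ∫ x in (0:ℝ)..1, (Q j).eval (x ^ 2) * wt D x
        = if j = 0 then c * ∫ x in (0:ℝ)..1, wt D x else 0 := by
      intro j
      by_cases hj : j = 0
      · subst hj
        simp [hc, intervalIntegral.integral_const_mul]
      · have h1 := mass_zero hD (Q j)
        rw [hQ] at h1
        simp only [Polynomial.eval_smul, smul_eq_mul, mul_assoc,
          intervalIntegral.integral_const_mul] at h1
        have h2 := mu_pos hD hj
        simp only [hj, if_false]
        rcases mul_eq_zero.1 h1 with h | h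
        · linarith
        · exact h
    have : ∀ x, S.eval (x ^ 2) * wt D x
        = ∑ j ∈ Finset.range N, (Q j).eval (x ^ 2) * wt D x := by
      intro x
      rw [← Finset.sum_mul, ← Polynomial.eval_finsetSum, ← hN N (by omega)]
    simp only [this]
    rw [intervalIntegral.integral_finsetSum]
    · simp only [hj]
      rw [Finset.sum_ite_eq' (Finset.range N) 0]
      simp [hNdef]
    · intro j _
      apply Continuous.intervalIntegrable
      exact (cont1 _).mul (wt_cont hD)
  · have e1 : ∫ x in (0:ℝ)..1, Fun D (1 / p) ka c (2 * x * 0) x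
        = ka * (c ^ (1 / p)) ^ 2 * ∫ x in (0:ℝ)..1, wt D x := by
      simp [Fun, intervalIntegral.integral_const_mul]
    rw [← e1]
    refine hfin.trans (le_of_eq ?_)
    simp only [hJ, hSN]


/-! ### Approximation -/

open Polynomial in
lemma exists_odd_part (q : ℝ[X]) : ∃ r : ℝ[X], ∀ x, q.eval x - q.eval (-x) = x * r.eval (x ^ 2) := by
  induction q using Polynomial.induction_on' with
  | add P P' h h' =>
    obtain ⟨r, hr⟩ := h
    obtain ⟨r', hr'⟩ := h'
    refine ⟨r + r', fun x => ?_⟩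
    simp only [eval_add, mul_add, ← hr, ← hr']
    ring
  | monomial k a =>
    rcases Nat.even_or_odd k with h | h
    · exact ⟨0, fun x => by simp [h.neg_pow]⟩
    · obtain ⟨j, rfl⟩ := h
      refine ⟨C (2 * a) * X ^ j, fun x => ?_⟩
      have : Odd (2 * j + 1) := ⟨j, rfl⟩
      simp [this.neg_pow]
      ring

open Polynomial in
lemma exists_antideriv (r : ℝ[X]) : ∃ S : ℝ[X], derivative S = r := by
  induction r using Polynomial.induction_on' with
  | add P P' h h' =>
    obtain ⟨r, hr⟩ := h
    obtain ⟨r', hr'⟩ := h'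
    exact ⟨r + r', by simp [hr, hr']⟩
  | monomial k a =>
    refine ⟨monomial (k + 1) (a / (k + 1)), ?_⟩
    rw [derivative_monomial]
    have : (k:ℝ) + 1 ≠ 0 := by positivity
    simp
    field_simp

lemma exists_approx (g k : ℝ → ℝ) (hk : ContinuousOn k (Set.Icc (-1) 1))
    (hodd : ∀ x ∈ Set.Icc (-1:ℝ) 1, k (-x) = - k x)
    (hg : ∀ x ∈ Set.Icc (0:ℝ) 1, HasDerivWithinAt g (k x) (Set.Icc 0 1) x) (δ : ℝ) (hδ : 0 < δ) :
    ∃ S : Polynomial ℝ, ∀ x ∈ Set.Icc (0:ℝ) 1,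
      |S.eval (x ^ 2) - g x| ≤ δ ∧ |2 * x * S.derivative.eval (x ^ 2) - k x| ≤ δ := by
  obtain ⟨q, hq⟩ := exists_polynomial_near_of_continuousOn (-1) 1 k hk δ hδ
  obtain ⟨r, hr⟩ := exists_odd_part q
  obtain ⟨S0, hS0⟩ := exists_antideriv ((1 / 4 : ℝ) • r)
  let S : Polynomial ℝ := S0 + Polynomial.C (g 0 - S0.eval 0)
  have hS : S.derivative = (1 / 4 : ℝ) • r := by simp [S, hS0]
  have h2 : ∀ x ∈ Set.Icc (0:ℝ) 1, |2 * x * S.derivative.eval (x ^ 2) - k x| ≤ δ := by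
    intro x hx
    have hx1 : x ∈ Set.Icc (-1:ℝ) 1 := ⟨by linarith [hx.1], hx.2⟩
    have hx2 : -x ∈ Set.Icc (-1:ℝ) 1 := ⟨by linarith [hx.2], by linarith [hx.1]⟩
    have a1 := abs_lt.1 (hq x hx1)
    have a2 := abs_lt.1 (hq (-x) hx2)
    rw [hodd x hx1] at a2
    have e : 2 * x * S.derivative.eval (x ^ 2) = (q.eval x - q.eval (-x)) / 2 := by
      rw [hr, hS]; simp; ring
    rw [e, abs_le]
    constructor <;> linarith [a1.1, a1.2, a2.1, a2.2]
  refine ⟨S, fun x hx => ⟨?_, h2 x hx⟩⟩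
  have := norm_image_sub_le_of_norm_deriv_le_segment' (f := fun x => S.eval (x ^ 2) - g x)
    (f' := fun x => 2 * x * S.derivative.eval (x ^ 2) - k x) (C := δ) (a := 0) (b := 1)
    (fun x hx => (poly_x_deriv S x).hasDerivWithinAt.sub (hg x hx))
    (fun x hx => h2 x ⟨hx.1, hx.2.le⟩) x hx
  have e0 : S.eval ((0:ℝ) ^ 2) - g 0 = 0 := by simp [S]
  rw [e0] at this
  simp only [sub_zero, Real.norm_eq_abs] at this
  refine this.trans ?_
  nlinarith [hx.2]

lemma wt_int_pos {D : ℝ} (hD : 2 ≤ D) : 0 < ∫ x in (0:ℝ)..1, wt D x := by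
  refine intervalIntegral.intervalIntegral_pos_of_pos_on ((wt_cont hD).intervalIntegrable _ _) ?_
    zero_lt_one
  intro x hx
  unfold wt
  apply Real.rpow_pos_of_pos
  nlinarith [hx.1, hx.2]

/-- The inequality for positive `C^1` functions. -/
lemma gen_ineq {D p al ka : ℝ} (hD : 2 ≤ D) (hp : 2 < p)
    (hal : al = 1 - (p - 1) * (D - 1) ^ 2 / (D * (D + 2))) (hal0 : 0 ≤ al)
    (hka : ka * (p - 2) = D + al * (D + 2)) (hka0 : 0 ≤ ka)
    (g k : ℝ → ℝ) (hk : ContinuousOn k (Set.Icc (-1) 1))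
    (hodd : ∀ x ∈ Set.Icc (-1:ℝ) 1, k (-x) = - k x)
    (hg : ∀ x ∈ Set.Icc (0:ℝ) 1, HasDerivWithinAt g (k x) (Set.Icc 0 1) x)
    (hg0 : ∀ x ∈ Set.Icc (0:ℝ) 1, 0 < g x) :
    ka * (((∫ x in (0:ℝ)..1, g x * wt D x) / ∫ x in (0:ℝ)..1, wt D x) ^ (1 / p)) ^ 2
        * ∫ x in (0:ℝ)..1, wt D x
      ≤ ∫ x in (0:ℝ)..1, Fun D (1 / p) ka (g x) (k x) x := by
  have hr0 : 0 < 1 / p := by positivity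
  have hr1 : 1 / p < 1 := by rw [div_lt_one (by linarith)]; linarith
  have hz := wt_int_pos hD
  set z := ∫ x in (0:ℝ)..1, wt D x with hzdef
  have gc : ContinuousOn g (Set.Icc 0 1) := fun x hx => (hg x hx).continuousWithinAt
  have kc : ContinuousOn k (Set.Icc 0 1) := hk.mono (Set.Icc_subset_Icc (by norm_num) le_rfl)
  obtain ⟨y0, hy0, hmin⟩ := (isCompact_Icc (a := (0:ℝ)) (b := 1)).exists_isMinOn
    (Set.nonempty_Icc.2 zero_le_one) gc
  set m := g y0 with hm
  have hm0 : 0 < m := hg0 y0 hy0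
  have hmin' : ∀ x ∈ Set.Icc (0:ℝ) 1, m ≤ g x := fun x hx => hmin hx
  obtain ⟨K1, hK1⟩ := (isCompact_Icc (a := (0:ℝ)) (b := 1)).exists_bound_of_continuousOn gc
  obtain ⟨K2, hK2⟩ := (isCompact_Icc (a := (0:ℝ)) (b := 1)).exists_bound_of_continuousOn kc
  choose S hS using fun n : ℕ => exists_approx g k hk hodd hg (1 / ((n:ℝ) + 1)) (by positivity)
  set K := max K1 K2 + 1 with hK
  have hδ1 : ∀ n : ℕ, 1 / ((n:ℝ) + 1) ≤ 1 := fun n => by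
    rw [div_le_one (by positivity)]; linarith [n.cast_nonneg (α := ℝ)]
  have hδ := tendsto_one_div_add_atTop_nhds_zero_nat (𝕜 := ℝ)
  have hev : ∀ᶠ n : ℕ in Filter.atTop, 1 / ((n:ℝ) + 1) < m / 2 :=
    hδ.eventually (gt_mem_nhds (by positivity))
  have hb : ∀ᶠ n : ℕ in Filter.atTop, ∀ x ∈ Set.Icc (0:ℝ) 1, m / 2 ≤ (S n).eval (x ^ 2) ∧
      (S n).eval (x ^ 2) ≤ K ∧ |2 * x * (S n).derivative.eval (x ^ 2)| ≤ K := by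
    filter_upwards [hev] with n hn x hx
    obtain ⟨h1, h2⟩ := hS n x hx
    have h1' := abs_le.1 h1
    have := hmin' x hx
    have b1 := (le_abs_self _).trans (hK1 x hx)
    have b2 := hK2 x hx
    rw [Real.norm_eq_abs] at b2
    have m1 := le_max_left K1 K2
    have m2 := le_max_right K1 K2
    refine ⟨by linarith, by linarith [hδ1 n], ?_⟩
    have := abs_sub_abs_le_abs_sub (2 * x * (S n).derivative.eval (x ^ 2)) (k x)
    linarith [hδ1 n]
  have cont1 : ∀ P : Polynomial ℝ, Continuous (fun x => P.eval (x ^ 2)) := fun P =>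
    P.continuous.comp (continuous_pow 2)
  have cont2 : ∀ P : Polynomial ℝ, Continuous (fun x => 2 * x * P.eval (x ^ 2)) := fun P => by
    have := cont1 P
    fun_prop
  have lim1 : ∀ x ∈ Set.Icc (0:ℝ) 1,
      Filter.Tendsto (fun n => (S n).eval (x ^ 2)) Filter.atTop (nhds (g x)) := fun x hx => by
    rw [tendsto_iff_norm_sub_tendsto_zero]
    exact squeeze_zero (fun _ => norm_nonneg _) (fun n => (hS n x hx).1) hδ
  have lim2 : ∀ x ∈ Set.Icc (0:ℝ) 1,
      Filter.Tendsto (fun n => 2 * x * (S n).derivative.eval (x ^ 2)) Filter.atTop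
        (nhds (k x)) := fun x hx => by
    rw [tendsto_iff_norm_sub_tendsto_zero]
    exact squeeze_zero (fun _ => norm_nonneg _) (fun n => (hS n x hx).2) hδ
  have L1 := Fun_tendsto (D := D) (r := 1 / p) (ka := ka) hD hr0 hr1 hka0 (half_pos hm0) hb hg0
    (Filter.Eventually.of_forall fun n => (cont1 (S n)).continuousOn)
    (Filter.Eventually.of_forall fun n => (cont2 (S n).derivative).continuousOn) lim1 lim2
  have L2 : Filter.Tendsto (fun n => ∫ x in (0:ℝ)..1, (S n).eval (x ^ 2) * wt D x) Filter.atTop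
      (nhds (∫ x in (0:ℝ)..1, g x * wt D x)) := by
    refine intervalIntegral.tendsto_integral_filter_of_dominated_convergence (fun _ => K) ?_ ?_
      (by simp) ?_
    · refine Filter.Eventually.of_forall fun n => ?_
      exact ((cont1 (S n)).mul (wt_cont hD)).aestronglyMeasurable
    · filter_upwards [hb] with n hn
      refine Filter.Eventually.of_forall fun x hx => ?_
      rw [Set.uIoc_of_le zero_le_one] at hx
      have hx' : x ∈ Set.Icc (0:ℝ) 1 := ⟨hx.1.le, hx.2⟩
      obtain ⟨h1, h2, _⟩ := hn x hx'
      have hpos : 0 ≤ (S n).eval (x ^ 2) := by linarith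
      rw [Real.norm_eq_abs, abs_of_nonneg (mul_nonneg hpos (wt_nonneg D hx'))]
      exact (mul_le_of_le_one_right hpos (wt_le_one hD hx')).trans h2
    · refine Filter.Eventually.of_forall fun x hx => ?_
      rw [Set.uIoc_of_le zero_le_one] at hx
      exact (lim1 x ⟨hx.1.le, hx.2⟩).mul_const _
  have L3 := (((L2.div_const z).rpow_const (p := 1 / p) (Or.inr hr0.le)).pow 2).const_mul ka
  refine le_of_tendsto_of_tendsto (L3.mul_const z) L1 ?_
  filter_upwards [hb] with n hn
  obtain ⟨c, -, hc1, hc2⟩ := poly_ineq hD hp hal hal0 hka hka0 (S n) (fun y hy => by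
    have hs : Real.sqrt y ∈ Set.Icc (0:ℝ) 1 := ⟨Real.sqrt_nonneg _, by
      exact Real.sqrt_le_iff.2 ⟨by norm_num, by simpa using hy.2⟩⟩
    have := (hn _ hs).1
    rw [Real.sq_sqrt hy.1] at this
    linarith)
  have e : (∫ x in (0:ℝ)..1, (S n).eval (x ^ 2) * wt D x) / z = c := by
    rw [hc1, ← hzdef]; field_simp
  rw [e]
  exact hc2

/-- The inequality on the half interval. -/
lemma half_ineq {D p al ka : ℝ} (hD : 2 ≤ D) (hp : 2 < p)
    (hal : al = 1 - (p - 1) * (D - 1) ^ 2 / (D * (D + 2))) (hal0 : 0 ≤ al)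
    (hka : ka * (p - 2) = D + al * (D + 2)) (hka0 : 0 ≤ ka)
    (f df : ℝ → ℝ) (hdf : ContinuousOn df (Set.Icc (-1) 1))
    (hodd : ∀ x ∈ Set.Icc (-1:ℝ) 1, df (-x) = - df x)
    (hsym : ∀ x ∈ Set.Icc (-1:ℝ) 1, f (-x) = f x)
    (hf : ∀ x ∈ Set.Icc (-1:ℝ) 1, HasDerivWithinAt f (df x) (Set.Icc (-1) 1) x) :
    ka * (((∫ x in (0:ℝ)..1, |f x| ^ p * wt D x) / ∫ x in (0:ℝ)..1, wt D x) ^ (1 / p)) ^ 2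
        * ∫ x in (0:ℝ)..1, wt D x
      ≤ (∫ x in (0:ℝ)..1, df x ^ 2 * (1 - x ^ 2) * wt D x)
        + ka * ∫ x in (0:ℝ)..1, f x ^ 2 * wt D x := by
  have hz := wt_int_pos hD
  have hr0 : 0 < 1 / p := by positivity
  set z := ∫ x in (0:ℝ)..1, wt D x with hzdef
  have hsub : Set.Icc (0:ℝ) 1 ⊆ Set.Icc (-1:ℝ) 1 := Set.Icc_subset_Icc (by norm_num) le_rfl
  have fc : ContinuousOn f (Set.Icc (-1) 1) := fun x hx => (hf x hx).continuousWithinAt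
  have fc' := fc.mono hsub
  have dfc' := hdf.mono hsub
  have cw : ContinuousOn (wt D) (Set.Icc 0 1) := (wt_cont hD).continuousOn
  have cint : ∀ h : ℝ → ℝ, ContinuousOn h (Set.Icc 0 1) → IntervalIntegrable h volume 0 1 :=
    fun h hh => ContinuousOn.intervalIntegrable (by rwa [Set.uIcc_of_le zero_le_one])
  have hp0 : p ≠ 0 := by linarith
  have step : ∀ e > 0,
      ka * (((∫ x in (0:ℝ)..1, |f x| ^ p * wt D x) / z) ^ (1 / p)) ^ 2 * z
      ≤ ((∫ x in (0:ℝ)..1, df x ^ 2 * (1 - x ^ 2) * wt D x)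
        + ka * ∫ x in (0:ℝ)..1, f x ^ 2 * wt D x) + (ka * z) * e := by
    intro e he
    have hpos : ∀ x, 0 < f x ^ 2 + e := fun x => by positivity
    have cpow : ∀ s : ℝ, ContinuousOn (fun x => (f x ^ 2 + e) ^ s) (Set.Icc (-1) 1) := fun s =>
      ContinuousOn.rpow_const (by fun_prop) fun x _ => Or.inl (hpos x).ne'
    have key := gen_ineq hD hp hal hal0 hka hka0 (fun x => (f x ^ 2 + e) ^ (p / 2))
      (fun x => p * f x * df x * (f x ^ 2 + e) ^ (p / 2 - 1))
      (by have := cpow (p / 2 - 1); fun_prop)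
      (fun x hx => by simp only [hsym x hx, hodd x hx]; ring)
      (fun x hx => by
        have h1 := ((((hf x (hsub hx)).mono hsub).pow 2).add_const e).rpow_const (p := p / 2)
          (Or.inl (hpos x).ne')
        refine h1.congr_deriv ?_
        simp only [Pi.pow_apply]
        push_cast
        ring)
      (fun x _ => Real.rpow_pos_of_pos (hpos x) _)
    have h1 : ka * (((∫ x in (0:ℝ)..1, |f x| ^ p * wt D x) / z) ^ (1 / p)) ^ 2 * z
        ≤ ka * (((∫ x in (0:ℝ)..1, (f x ^ 2 + e) ^ (p / 2) * wt D x) / z) ^ (1 / p)) ^ 2 * z := by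
      have h0 : 0 ≤ ∫ x in (0:ℝ)..1, |f x| ^ p * wt D x :=
        intervalIntegral.integral_nonneg zero_le_one fun x hx =>
          mul_nonneg (Real.rpow_nonneg (abs_nonneg _) _) (wt_nonneg D hx)
      have h2 : ∫ x in (0:ℝ)..1, |f x| ^ p * wt D x
          ≤ ∫ x in (0:ℝ)..1, (f x ^ 2 + e) ^ (p / 2) * wt D x := by
        refine intervalIntegral.integral_mono_on zero_le_one (cint _ ?_) (cint _ ?_) ?_
        · exact (fc'.abs.rpow_const fun x _ => Or.inr (by linarith)).mul cw
        · exact ((cpow _).mono hsub).mul cw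
        · intro x hx
          refine mul_le_mul_of_nonneg_right ?_ (wt_nonneg D hx)
          have : |f x| ^ p = (f x ^ 2) ^ (p / 2) := by
            rw [← sq_abs, ← Real.rpow_natCast, ← Real.rpow_mul (abs_nonneg _)]
            congr 1
            push_cast
            ring
          rw [this]
          exact Real.rpow_le_rpow (sq_nonneg _) (by linarith) (by linarith)
      gcongr
    refine h1.trans (key.trans ?_)
    have h3 : ((∫ x in (0:ℝ)..1, df x ^ 2 * (1 - x ^ 2) * wt D x)
        + ka * ∫ x in (0:ℝ)..1, f x ^ 2 * wt D x) + (ka * z) * e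
        = ∫ x in (0:ℝ)..1, (df x ^ 2 * (1 - x ^ 2) * wt D x + ka * (f x ^ 2 * wt D x)
          + ka * e * wt D x) := by
      rw [intervalIntegral.integral_add, intervalIntegral.integral_add,
        intervalIntegral.integral_const_mul, intervalIntegral.integral_const_mul]
      · ring
      all_goals exact cint _ (by fun_prop)
    rw [h3]
    refine intervalIntegral.integral_mono_on zero_le_one (cint _ ?_) (cint _ (by fun_prop)) ?_
    · refine Fun_contOn hD (fun x _ => Real.rpow_pos_of_pos (hpos x) _) ((cpow _).mono hsub) ?_
      have := (cpow (p / 2 - 1)).mono hsub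
      fun_prop
    · intro x hx
      unfold Fun
      have hx0 := hpos x
      have a1 : ((f x ^ 2 + e) ^ (p / 2)) ^ (1 / p) = (f x ^ 2 + e) ^ (1 / 2 : ℝ) := by
        rw [← Real.rpow_mul hx0.le]; congr 1; field_simp
      have a2 : (((f x ^ 2 + e) ^ (p / 2)) ^ (1 / p)) ^ 2 = f x ^ 2 + e := by
        rw [a1, ← Real.rpow_natCast, ← Real.rpow_mul hx0.le]; norm_num
      have a3 : (1 / p * ((f x ^ 2 + e) ^ (p / 2)) ^ (1 / p - 1)
          * (p * f x * df x * (f x ^ 2 + e) ^ (p / 2 - 1))) ^ 2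
          = f x ^ 2 * df x ^ 2 / (f x ^ 2 + e) := by
        have : ((f x ^ 2 + e) ^ (p / 2)) ^ (1 / p - 1) * (f x ^ 2 + e) ^ (p / 2 - 1)
            = (f x ^ 2 + e) ^ (-(1 / 2) : ℝ) := by
          rw [← Real.rpow_mul hx0.le, ← Real.rpow_add hx0]; congr 1; field_simp; ring
        have h4 : ((f x ^ 2 + e) ^ (-(1 / 2) : ℝ)) ^ 2 = (f x ^ 2 + e)⁻¹ := by
          rw [← Real.rpow_natCast, ← Real.rpow_mul hx0.le, ← Real.rpow_neg_one]; norm_num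
        calc _ = (((f x ^ 2 + e) ^ (p / 2)) ^ (1 / p - 1) * (f x ^ 2 + e) ^ (p / 2 - 1)) ^ 2
              * (f x ^ 2 * df x ^ 2) := by field_simp
          _ = _ := by rw [this, h4]; field_simp
      rw [a2, a3]
      have a4 : f x ^ 2 * df x ^ 2 / (f x ^ 2 + e) ≤ df x ^ 2 := by
        rw [div_le_iff₀ hx0]
        nlinarith [sq_nonneg (df x), mul_nonneg (sq_nonneg (df x)) he.le]
      have hn : 0 ≤ 1 - x ^ 2 := by nlinarith [hx.1, hx.2]
      have hw := wt_nonneg D hx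
      have := mul_le_mul_of_nonneg_right (mul_le_mul_of_nonneg_right a4 hn) hw
      linarith
  refine le_of_forall_pos_le_add fun δ hδ => ?_
  have h := step (δ / (ka * z + 1)) (by positivity)
  have : (ka * z) * (δ / (ka * z + 1)) ≤ δ := by
    have : 0 ≤ ka * z := by positivity
    rw [mul_div_assoc', div_le_iff₀ (by positivity)]
    nlinarith
  linarith



/-! ### The normalization constant and the final assembly -/

lemma Zd_pos_s19 (d : ℕ) (hd : 2 ≤ d) : 0 < Zd d := by
  have hd' : (2:ℝ) ≤ d := by exact_mod_cast hd
  unfold Zd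
  have h1 := Real.Gamma_pos_of_pos (show 0 < (d:ℝ) / 2 by linarith)
  have h2 := Real.Gamma_pos_of_pos (show 0 < ((d:ℝ) + 1) / 2 by linarith)
  have h3 := Real.sqrt_pos.2 Real.pi_pos
  positivity

lemma beta_int {s : ℝ} (hs : 1 ≤ s) :
    ∫ x in (0:ℝ)..1, x ^ (s - 1) * (1 - x) ^ (s - 1)
      = Real.Gamma s * Real.Gamma s / Real.Gamma (2 * s) := by
  have h := ProbabilityTheory.beta_eq_betaIntegralReal s s (by linarith) (by linarith)
  unfold ProbabilityTheory.beta at h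
  rw [two_mul, h, Complex.betaIntegral]
  have e : ∀ x ∈ Set.uIcc (0:ℝ) 1,
      (x:ℂ) ^ ((s:ℂ) - 1) * (1 - (x:ℂ)) ^ ((s:ℂ) - 1)
        = ((x ^ (s - 1) * (1 - x) ^ (s - 1) : ℝ) : ℂ) := by
    intro x hx
    rw [Set.uIcc_of_le zero_le_one] at hx
    have h0 := hx.1
    have h1 : 0 ≤ 1 - x := by linarith [hx.2]
    rw [Complex.ofReal_mul, Complex.ofReal_cpow h0, Complex.ofReal_cpow h1]
    push_cast
    rfl
  rw [intervalIntegral.integral_congr e, intervalIntegral.integral_ofReal, Complex.ofReal_re]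

lemma wt_int_full (d : ℕ) (hd : 2 ≤ d) : ∫ x in (-1:ℝ)..1, wt d x = Zd d := by
  have hd' : (2:ℝ) ≤ d := by exact_mod_cast hd
  have h1 := Real.Gamma_pos_of_pos (show 0 < (d:ℝ) / 2 by linarith)
  have h2 := Real.Gamma_pos_of_pos (show 0 < ((d:ℝ) + 1) / 2 by linarith)
  have hb := beta_int (s := (d:ℝ) / 2) (by linarith)
  have hdup := Real.Gamma_mul_Gamma_add_half ((d:ℝ) / 2)
  have h3 := Real.Gamma_pos_of_pos (show 0 < 2 * ((d:ℝ) / 2) by linarith)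
  have hsub := intervalIntegral.integral_comp_mul_sub (a := (0:ℝ)) (b := 1)
    (fun x => wt (d:ℝ) x) (show (2:ℝ) ≠ 0 by norm_num) 1
  have e : ∀ x ∈ Set.uIcc (0:ℝ) 1, wt (d:ℝ) (2 * x - 1)
      = (4:ℝ) ^ ((d:ℝ) / 2 - 1) * (x ^ ((d:ℝ) / 2 - 1) * (1 - x) ^ ((d:ℝ) / 2 - 1)) := by
    intro x hx
    rw [Set.uIcc_of_le zero_le_one] at hx
    have h0 := hx.1
    have h1 : 0 ≤ 1 - x := by linarith [hx.2]
    unfold wt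
    rw [← Real.mul_rpow h0 h1, ← Real.mul_rpow (by norm_num) (by positivity)]
    congr 1; ring
  rw [intervalIntegral.integral_congr e, intervalIntegral.integral_const_mul, hb] at hsub
  norm_num at hsub
  have e2 : ((d:ℝ) + 1) / 2 = (d:ℝ) / 2 + 1 / 2 := by ring
  have e3 : 2 * ((d:ℝ) / 2) = d := by ring
  rw [e2] at h2
  rw [e3] at hdup h3
  rw [e3] at hsub
  have e4 : (4:ℝ) ^ ((d:ℝ) / 2 - 1) * (2:ℝ) ^ (1 - (d:ℝ)) = 1 / 2 := by
    rw [show (4:ℝ) = 2 ^ (2:ℝ) by norm_num, ← Real.rpow_mul (by norm_num),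
      ← Real.rpow_add (by norm_num), show 2 * ((d:ℝ) / 2 - 1) + (1 - (d:ℝ)) = -1 by ring,
      Real.rpow_neg_one]
    norm_num
  have e5 : ∫ x in (-1:ℝ)..1, wt d x = 2 * ((4:ℝ) ^ ((d:ℝ) / 2 - 1) *
      (Real.Gamma ((d:ℝ) / 2) * Real.Gamma ((d:ℝ) / 2) / Real.Gamma d)) := by
    rw [hsub]; ring
  rw [e5]
  unfold Zd
  rw [e2, eq_div_iff h2.ne']
  calc _ = 2 * (4:ℝ) ^ ((d:ℝ) / 2 - 1) * Real.Gamma ((d:ℝ) / 2) *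
        (Real.Gamma ((d:ℝ) / 2) * Real.Gamma ((d:ℝ) / 2 + 1 / 2)) / Real.Gamma d := by ring
    _ = 2 * ((4:ℝ) ^ ((d:ℝ) / 2 - 1) * (2:ℝ) ^ (1 - (d:ℝ))) * √π * Real.Gamma ((d:ℝ) / 2)
        * (Real.Gamma d / Real.Gamma d) := by rw [hdup]; ring
    _ = _ := by rw [e4, div_self h3.ne']; ring

/-- Even integrals over `(-1,1)`. -/
lemma even_int {g : ℝ → ℝ} (hg : ContinuousOn g (Set.Icc (-1) 1))
    (he : ∀ x ∈ Set.Icc (-1:ℝ) 1, g (-x) = g x) :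
    ∫ x in (-1:ℝ)..1, g x = 2 * ∫ x in (0:ℝ)..1, g x := by
  have i1 : IntervalIntegrable g volume (-1) 0 :=
    (hg.mono (Set.Icc_subset_Icc le_rfl (by norm_num))).intervalIntegrable_of_Icc (by norm_num)
  have i2 : IntervalIntegrable g volume 0 1 :=
    (hg.mono (Set.Icc_subset_Icc (by norm_num) le_rfl)).intervalIntegrable_of_Icc (by norm_num)
  rw [← intervalIntegral.integral_add_adjacent_intervals i1 i2]
  have h := intervalIntegral.integral_comp_neg (a := (0:ℝ)) (b := 1) g
  rw [neg_zero] at h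
  rw [← h]
  have : ∫ x in (0:ℝ)..1, g (-x) = ∫ x in (0:ℝ)..1, g x := by
    apply intervalIntegral.integral_congr
    intro x hx
    rw [Set.uIcc_of_le zero_le_one] at hx
    exact he x ⟨by linarith [hx.1], hx.2⟩
  rw [this]; ring

lemma wt_neg (D x : ℝ) : wt D (-x) = wt D x := by unfold wt; rw [neg_sq]

/-- Integrals of even functions against `nuMeas`. -/
lemma nu_int (d : ℕ) (hd : 2 ≤ d) {h g : ℝ → ℝ} (hg : ContinuousOn g (Set.Icc (-1) 1))
    (he : ∀ x ∈ Set.Icc (-1:ℝ) 1, g (-x) = g x) (hh : ∀ x ∈ Set.Ioo (-1:ℝ) 1, h x = g x) :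
    ∫ x, h x ∂(nuMeas d) = (2 / Zd d) * ∫ x in (0:ℝ)..1, g x * wt d x := by
  have hd' : (2:ℝ) ≤ d := by exact_mod_cast hd
  have hZ := Zd_pos_s19 d hd
  have hw := wt_cont hd'
  unfold nuMeas
  rw [integral_withDensity_eq_integral_toReal_smul]
  · have e : ∀ x ∈ Set.Ioo (-1:ℝ) 1,
        (ENNReal.ofReal ((1 - x ^ 2) ^ ((d : ℝ) / 2 - 1) / Zd d)).toReal • h x
          = (1 / Zd d) * (g x * wt d x) := by
      intro x hx
      have : 0 ≤ 1 - x ^ 2 := by nlinarith [hx.1, hx.2]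
      rw [ENNReal.toReal_ofReal (div_nonneg (Real.rpow_nonneg this _) hZ.le), hh x hx, smul_eq_mul]
      unfold wt
      ring
    rw [setIntegral_congr_fun measurableSet_Ioo e, ← integral_Ioc_eq_integral_Ioo,
      ← intervalIntegral.integral_of_le (by norm_num), intervalIntegral.integral_const_mul,
      even_int (g := fun x => g x * wt d x) (hg.mul hw.continuousOn) (fun x hx => by
        simp only [he x hx, wt_neg])]
    ring
  · have : Measurable fun x : ℝ => (1 - x ^ 2) ^ ((d : ℝ) / 2 - 1) / Zd d := by
      have := hw.measurable
      unfold wt at this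
      exact this.div_const _
    exact this.ennreal_ofReal
  · exact Filter.Eventually.of_forall fun x => ENNReal.ofReal_lt_top

theorem ultraspherical_improved_symmetric (d : ℕ) (hd : 2 ≤ d) (p : ℝ) (hp1 : 2 < p)
    (hp2 : p < (2 * (d : ℝ) ^ 2 + 1) / ((d : ℝ) - 1) ^ 2)
    (f : ℝ → ℝ) (hf : ContDiffOn ℝ 1 f (Set.Icc (-1 : ℝ) 1))
    (hsym : ∀ x ∈ Set.Icc (-1 : ℝ) 1, f (-x) = f x) :
    ∫ x, (deriv f x) ^ 2 * (1 - x ^ 2) ∂(nuMeas d) ≥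
      ((d : ℝ) + (1 - (p - 1) * ((d : ℝ) - 1) ^ 2 / ((d : ℝ) * ((d : ℝ) + 2))) * ((d : ℝ) + 2)) *
        (((∫ x, |f x| ^ p ∂(nuMeas d)) ^ (2 / p) -
          ∫ x, |f x| ^ (2 : ℝ) ∂(nuMeas d)) / (p - 2)) := by
  have hD : (2:ℝ) ≤ d := by exact_mod_cast hd
  have hZ := Zd_pos_s19 d hd
  obtain ⟨al, hal⟩ : ∃ al : ℝ, al = 1 - (p - 1) * ((d : ℝ) - 1) ^ 2 / ((d : ℝ) * ((d : ℝ) + 2)) :=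
    ⟨_, rfl⟩
  have hal0 : 0 ≤ al := by
    rw [lt_div_iff₀ (by nlinarith)] at hp2
    rw [hal, sub_nonneg, div_le_one (by positivity)]
    nlinarith
  rw [← hal]
  obtain ⟨ka, hkadef⟩ : ∃ ka : ℝ, ka = ((d:ℝ) + al * ((d:ℝ) + 2)) / (p - 2) := ⟨_, rfl⟩
  have hp20 : 0 < p - 2 := by linarith
  have hka : ka * (p - 2) = (d:ℝ) + al * ((d:ℝ) + 2) := by
    rw [hkadef, div_mul_cancel₀ _ hp20.ne']
  have hka0 : 0 ≤ ka := by rw [hkadef]; positivity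
  obtain ⟨df, hdfdef⟩ : ∃ df : ℝ → ℝ, df = derivWithin f (Set.Icc (-1) 1) := ⟨_, rfl⟩
  have hud : UniqueDiffOn ℝ (Set.Icc (-1:ℝ) 1) := uniqueDiffOn_Icc (by norm_num)
  have hdf : ContinuousOn df (Set.Icc (-1) 1) := by
    rw [hdfdef]; exact hf.continuousOn_derivWithin hud le_rfl
  have hfd : ∀ x ∈ Set.Icc (-1:ℝ) 1, HasDerivWithinAt f (df x) (Set.Icc (-1) 1) x := by
    intro x hx
    rw [hdfdef]
    exact (hf.differentiableOn one_ne_zero x hx).hasDerivWithinAt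
  have hodd : ∀ x ∈ Set.Icc (-1:ℝ) 1, df (-x) = - df x := by
    intro x hx
    have hx' : -x ∈ Set.Icc (-1:ℝ) 1 := ⟨by linarith [hx.2], by linarith [hx.1]⟩
    have h1 := (hfd (-x) hx').comp x (hasDerivAt_neg x).hasDerivWithinAt
      (show Set.MapsTo (fun x : ℝ => -x) (Set.Icc (-1:ℝ) 1) (Set.Icc (-1:ℝ) 1) from
        fun y hy => ⟨by linarith [hy.2], by linarith [hy.1]⟩)
    have h2 : HasDerivWithinAt f (df (-x) * -1) (Set.Icc (-1) 1) x :=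
      h1.congr (fun y hy => (hsym y hy).symm) (hsym x hx).symm
    have := (hud x hx).eq_deriv _ h2 (hfd x hx)
    linarith
  have hderiv : ∀ x ∈ Set.Ioo (-1:ℝ) 1, deriv f x = df x := fun x hx =>
    ((hfd x ⟨hx.1.le, hx.2.le⟩).hasDerivAt (Icc_mem_nhds hx.1 hx.2)).deriv
  have cf := hf.continuousOn
  have main := half_ineq hD hp1 hal hal0 hka hka0 f df hdf hodd hsym hfd
  have I1 := nu_int d hd (h := fun x => (deriv f x) ^ 2 * (1 - x ^ 2))
    (g := fun x => df x ^ 2 * (1 - x ^ 2)) (by fun_prop)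
    (fun x hx => by simp only [hodd x hx]; ring)
    (fun x hx => by simp only [hderiv x hx])
  have I2 := nu_int d hd (h := fun x => |f x| ^ p) (g := fun x => |f x| ^ p)
    (cf.abs.rpow_const (fun x hx => Or.inr (by linarith)))
    (fun x hx => by simp only [hsym x hx]) (fun x hx => rfl)
  have I3 := nu_int d hd (h := fun x => |f x| ^ (2:ℝ)) (g := fun x => f x ^ 2)
    (by fun_prop) (fun x hx => by simp only [hsym x hx])
    (fun x hx => by simp only [Real.rpow_two, sq_abs])
  have hz : Zd d = 2 * ∫ x in (0:ℝ)..1, wt d x := by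
    rw [← wt_int_full d hd]
    exact even_int (wt_cont hD).continuousOn (fun x _ => wt_neg _ x)
  rw [I1, I2, I3]
  obtain ⟨z, hzd⟩ : ∃ z : ℝ, z = ∫ x in (0:ℝ)..1, wt d x := ⟨_, rfl⟩
  rw [← hzd] at hz main
  have hz0 : 0 < z := by linarith
  have hA : 0 ≤ ∫ x in (0:ℝ)..1, |f x| ^ p * wt d x :=
    intervalIntegral.integral_nonneg zero_le_one fun x hx =>
      mul_nonneg (Real.rpow_nonneg (abs_nonneg _) _) (wt_nonneg _ hx)
  generalize (∫ x in (0:ℝ)..1, |f x| ^ p * wt d x) = A at *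
  generalize (∫ x in (0:ℝ)..1, df x ^ 2 * (1 - x ^ 2) * wt d x) = B at *
  generalize (∫ x in (0:ℝ)..1, f x ^ 2 * wt d x) = C at *
  have e1 : 2 / Zd d = 1 / z := by rw [hz]; field_simp
  have e2 : ((A / z) ^ (1 / p)) ^ 2 = (1 / z * A) ^ (2 / p) := by
    rw [← Real.rpow_two, ← Real.rpow_mul (by positivity)]
    congr 1 <;> ring
  rw [e2] at main
  rw [e1, ge_iff_le, ← hka]
  generalize (1 / z * A) ^ (2 / p) = R at *
  have e3 : ka * (p - 2) * ((R - 1 / z * C) / (p - 2)) = (ka * R * z - ka * C) / z := by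
    field_simp
  rw [e3, div_le_iff₀ hz0]
  have : 1 / z * B * z = B := by field_simp
  rw [this]; linarith
end
end
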